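/- Let W be a wedge in ℝ². For every natural number k with k ≥ 10, no guard set G ⊆ W with exactly k + 1 guards k-covers W, and there exists a guard set G ⊆ W with exactly k + 2 guards that k-covers W. -/

import Mathlib

/-!
In the coordinates given by the legs, the wedge becomes the quadrant `0 ≤ x`, `0 ≤ y`.

**No set of `k + 1` guards.** Such a guard set would leave every point of the quadrant hidden from
at most one guard; call it good (`Good`). A good set has at most ten elements (`Good.card_le`),
while `k + 1 ≥ 11`. The basic tool is that two rays, each issuing from a guard through another
guard, with different origins, do not meet in the quadrant beyond the second guards (`Good.meet`).

* If the guard `b` is between the guards `a` and `c`, then beyond `c` both `a` and `b` are blocked.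
  Hence the line leaves the quadrant at `c`, and likewise at `a`, so `a` and `c` are on different
  legs (`Good.ends`). In particular each leg carries at most two guards.
* If the line through two further guards `x`, `y` of a triangle of guards separates a vertex from
  the other two strictly, then two rays through `x` and `y` meet inside the triangle. So the line
  contains a vertex, and then one of `x`, `y` is on the opposite side and the other one strictly
  inside (`Good.tri_two`). Consequently a triangle of guards contains at most two further guards
  (`Good.tri_three`).
* Suppose that the convex hull has `m ≥ 5` vertices. For consecutive vertices `a, b, c, d`, the rays
  from `a` through `b` and from `d` through `c` do not meet in the quadrant: either their meeting
  point has a negative coordinate, or they do not meet at all (`Good.ear`). Each of these three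
  cases occurs only for pairwise adjacent hull edges `b c` (`tip_combination`, `Viol.adj`), thus at
  most twice. This gives `m ≤ 6` (`Good.hullV_card`). A hull edge containing a third guard connects
  the two legs, and if there is one then `m ≤ 5` (`Good.hullV_card_of_beyond`). There are at most
  two such edges (`Good.longEdges_card`).
* Since the legs carry at most four guards, `m ≥ 5` yields a hull vertex `v` on neither leg. The
  `m - 2` triangles spanned by `v` and a hull edge cover the convex hull. Such a triangle contains
  at most one guard besides the hull vertices, or two if its outer side contains a third guard. So
  the number of guards is at most `6 + 4 = 10`, or at most `5 + 3 + 2 = 10`. If `m ≤ 4`, it is at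
  most `4 + 2 * 2 = 8`.

**A set of `k + 2` guards.** It is enough that every point is hidden from at most two guards. For
`n = k + 2` and `C = n + 1`, take the points `(i, C ^ i)` with `i < n` (`exists_config`). The slope
of the chord from `i` to a later point `j` lies between `C ^ (j - 1)` and `C ^ j` (`chord_slope`).
These slopes grow so fast that a point is hidden from at most one guard by a guard further to the
right (`upward_unique`). The rays going to the left descend so steeply that they leave the
quadrant before another one can be met (`downward_unique`).
-/

open Set

noncomputable section

/-- The Euclidean plane ℝ². -/
abbrev Plane : Type := EuclideanSpace ℝ (Fin 2)

/-- `P` is a convex `n`-gon with vertex set `V`: `V` is a finite set of exactly `n ≥ 3`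
points, `P` is its convex hull, and each point of `V` is an extreme point of `P`. -/
def IsConvexPolygon (n : ℕ) (V : Finset Plane) (P : Set Plane) : Prop :=
  3 ≤ n ∧ V.card = n ∧ P = convexHull ℝ (V : Set Plane) ∧
    ∀ v ∈ V, v ∈ Set.extremePoints ℝ P

/-- Point `p` is hidden from guard `g` (w.r.t. guard set `G`): some other guard `b ∈ G`
lies strictly between `g` and `p`. -/
def Hidden (G : Finset Plane) (g p : Plane) : Prop :=
  ∃ b ∈ G, b ≠ g ∧ b ∈ openSegment ℝ g p

/-- `G` `k`-covers `P`: every point of `P` is visible from at least `k` guards of `G`. -/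
def KCovers (G : Finset Plane) (P : Set Plane) (k : ℕ) : Prop :=
  ∀ p ∈ P, k ≤ {g ∈ (G : Set Plane) | ¬ Hidden G g p}.ncard

/-- `W` is a wedge: a closed planar convex cone with apex `a` spanned by two
linearly independent directions `u`, `v`. -/
def IsWedge (W : Set Plane) : Prop :=
  ∃ a u v : Plane, LinearIndependent ℝ ![u, v] ∧
    W = {x | ∃ s t : ℝ, 0 ≤ s ∧ 0 ≤ t ∧ x = a + s • u + t • v}

namespace WedgeGuards

/-! ### Guards in the quadrant -/

/-- Twice the signed area of the triangle `p q r`; positive iff `p, q, r` turn left. -/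
def D (p q r : ℝ × ℝ) : ℝ :=
  (q.1 - p.1) * (r.2 - p.2) - (q.2 - p.2) * (r.1 - p.1)

/-- `q` lies strictly beyond `b` on the ray issuing from `g` through `b`, that is, `b` hides
`q` from `g`. Equivalently, `b` lies strictly between `g` and `q`. -/
def Beyond (g b q : ℝ × ℝ) : Prop :=
  g ≠ b ∧ ∃ t : ℝ, 0 < t ∧ q.1 = b.1 + t * (b.1 - g.1) ∧ q.2 = b.2 + t * (b.2 - g.2)

/-- `S` is a set of guards in the closed first quadrant such that no point of the quadrant is
hidden from two different guards. -/
structure Good (S : Finset (ℝ × ℝ)) : Prop where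
  nonneg : ∀ p ∈ S, 0 ≤ p.1 ∧ 0 ≤ p.2
  hidden : ∀ q : ℝ × ℝ, 0 ≤ q.1 → 0 ≤ q.2 → ∀ g ∈ S, ∀ b ∈ S, ∀ g' ∈ S, ∀ b' ∈ S,
    g ≠ g' → Beyond g b q → Beyond g' b' q → False

lemma Beyond.symm {g b q : ℝ × ℝ} (h : Beyond g b q) : Beyond q b g := by
  obtain ⟨hne, t, ht, h1, h2⟩ := h
  refine ⟨?_, 1 / t, by positivity, ?_, ?_⟩
  · rintro rfl
    apply hne
    have e1 : t * (q.1 - g.1) = 0 := by linarith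
    have e2 : t * (q.2 - g.2) = 0 := by linarith
    have e1 := (mul_eq_zero.1 e1).resolve_left ht.ne'
    have e2 := (mul_eq_zero.1 e2).resolve_left ht.ne'
    exact Prod.ext (by linarith) (by linarith)
  · rw [h1]; field_simp; ring
  · rw [h2]; field_simp; ring

/-- The rays from `g` through `b` and from `g'` through `b'` meet, in homogeneous coordinates,
at `m b - n g = m' b' - n' g'`. For a good set this point is not in the quadrant. -/
lemma Good.meet {S : Finset (ℝ × ℝ)} (hS : Good S) {g b g' b' : ℝ × ℝ}
    (hg : g ∈ S) (hb : b ∈ S) (hg' : g' ∈ S) (hb' : b' ∈ S) (h : g ≠ g') (hgb : g ≠ b)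
    (hgb' : g' ≠ b') {m n m' n' : ℝ} (hn : 0 < n) (hn' : 0 < n') (hw : m - n = m' - n')
    (hpos : 0 < m - n)
    (e1 : m * b.1 - n * g.1 = m' * b'.1 - n' * g'.1)
    (e2 : m * b.2 - n * g.2 = m' * b'.2 - n' * g'.2)
    (h1 : 0 ≤ m * b.1 - n * g.1) (h2 : 0 ≤ m * b.2 - n * g.2) : False := by
  have hpos' : 0 < m' - n' := hw ▸ hpos
  refine hS.hidden ((m * b.1 - n * g.1) / (m - n), (m * b.2 - n * g.2) / (m - n))
    (by positivity) (by positivity) g hg b hb g' hg' b' hb' h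
    ⟨hgb, n / (m - n), by positivity, ?_, ?_⟩ ⟨hgb', n' / (m' - n'), by positivity, ?_, ?_⟩
  · simp only; field_simp; ring
  · simp only; field_simp; ring
  · simp only [e1, hw]; field_simp; ring
  · simp only [e2, hw]; field_simp; ring

/-- If the guard `b` is strictly between the guards `a` and `c`, then the line leaves the
quadrant at `c`: beyond `c` both `a` and `b` are blocked. -/
lemma Good.leave {S : Finset (ℝ × ℝ)} (hS : Good S) {a b c : ℝ × ℝ}
    (ha : a ∈ S) (hb : b ∈ S) (hc : c ∈ S) (h : Beyond a b c) :
    (c.1 = 0 ∧ 0 < b.1) ∨ (c.2 = 0 ∧ 0 < b.2) := by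
  have hbc : b ≠ c := fun e => (h.symm.1 e.symm)
  obtain ⟨hab, t, ht, h1, h2⟩ := h
  have key : ∀ x y : ℝ, 0 ≤ x → 0 ≤ y → ¬ (y = 0 ∧ 0 < x) →
      ∃ e : ℝ, 0 < e ∧ ∀ e' : ℝ, 0 < e' → e' ≤ e → 0 ≤ y + e' * (y - x) := by
    intro x y hx hy hxy
    rcases hy.eq_or_lt with rfl | hy
    · have : x = 0 := by
        by_contra hne
        exact hxy ⟨rfl, lt_of_le_of_ne hx (Ne.symm hne)⟩
      subst this
      exact ⟨1, one_pos, by simp⟩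
    · refine ⟨y / (x + 1), by positivity, fun e' he' hle => ?_⟩
      rw [le_div_iff₀ (by positivity)] at hle
      nlinarith
  by_contra hcon
  rw [not_or] at hcon
  obtain ⟨e, he, He⟩ := key b.1 c.1 (hS.nonneg b hb).1 (hS.nonneg c hc).1 hcon.1
  obtain ⟨f, hf, Hf⟩ := key b.2 c.2 (hS.nonneg b hb).2 (hS.nonneg c hc).2 hcon.2
  have hm : 0 < min e f := lt_min he hf
  refine hS.hidden (c.1 + min e f * (c.1 - b.1), c.2 + min e f * (c.2 - b.2))
    (He _ hm (min_le_left _ _)) (Hf _ hm (min_le_right _ _)) a ha b hb b hb c hc hab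
    ⟨hab, t + min e f * t, by positivity, ?_, ?_⟩ ⟨hbc, min e f, hm, rfl, rfl⟩
  · simp only [h1]; ring
  · simp only [h2]; ring

/-- The two ends of a collinear triple of guards lie on different legs, away from the apex. -/
lemma Good.ends {S : Finset (ℝ × ℝ)} (hS : Good S) {a b c : ℝ × ℝ}
    (ha : a ∈ S) (hb : b ∈ S) (hc : c ∈ S) (h : Beyond a b c) :
    (a.1 = 0 ∧ 0 < a.2 ∧ 0 < c.1 ∧ c.2 = 0) ∨ (a.2 = 0 ∧ 0 < a.1 ∧ 0 < c.2 ∧ c.1 = 0) := by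
  have hc' := hS.leave ha hb hc h
  have ha' := hS.leave hc hb ha h.symm
  obtain ⟨-, t, ht, h1, h2⟩ := h
  have na := hS.nonneg a ha
  have nc := hS.nonneg c hc
  rcases ha' with ⟨a1, b1⟩ | ⟨a2, b2⟩ <;> rcases hc' with ⟨c1, b1'⟩ | ⟨c2, b2'⟩
  · nlinarith
  · left
    refine ⟨a1, ?_, ?_, c2⟩ <;> nlinarith
  · right
    refine ⟨a2, ?_, ?_, c1⟩ <;> nlinarith
  · nlinarith

/-- Both coordinates of the inner guard of a collinear triple are positive. -/
lemma Good.mid {S : Finset (ℝ × ℝ)} (hS : Good S) {a b c : ℝ × ℝ}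
    (ha : a ∈ S) (hb : b ∈ S) (hc : c ∈ S) (h : Beyond a b c) : 0 < b.1 ∧ 0 < b.2 := by
  have he := hS.ends ha hb hc h
  obtain ⟨-, t, ht, h1, h2⟩ := h
  rcases he with ⟨p, q, r, s⟩ | ⟨p, q, r, s⟩
  · constructor <;> nlinarith
  · constructor <;> nlinarith

/-- `y` is on the closed side `b c` of the triangle `a b c` and is no vertex. -/
lemma beyond_of_side {a b c y : ℝ × ℝ} (habc : 0 < D a b c) (h0 : D b c y = 0)
    (h1 : 0 ≤ D a b y) (h2 : 0 ≤ D c a y) (hb : y ≠ b) (hc : y ≠ c) : Beyond b y c := by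
  have hsum : D a b y + D c a y = D a b c := by simp only [D] at *; linarith
  have e1 : D a b c * (y.1 - b.1) = D a b y * (c.1 - b.1) := by
    have : D a b c * (y.1 - b.1) = D a b y * (c.1 - b.1) + D b c y * (a.1 - b.1) := by
      simp only [D]; ring
    rw [this, h0]; ring
  have e2 : D a b c * (y.2 - b.2) = D a b y * (c.2 - b.2) := by
    have : D a b c * (y.2 - b.2) = D a b y * (c.2 - b.2) + D b c y * (a.2 - b.2) := by
      simp only [D]; ring
    rw [this, h0]; ring
  have p1 : 0 < D a b y := by
    rcases h1.eq_or_lt with h | h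
    · exfalso; apply hb
      rw [← h, zero_mul, mul_eq_zero] at e1 e2
      exact Prod.ext (by linarith [e1.resolve_left habc.ne'])
        (by linarith [e2.resolve_left habc.ne'])
    · exact h
  have p2 : 0 < D c a y := by
    rcases h2.eq_or_lt with h | h
    · exfalso; apply hc
      rw [← h, add_zero] at hsum
      rw [hsum] at e1 e2
      exact Prod.ext (by linarith [mul_left_cancel₀ habc.ne' e1])
        (by linarith [mul_left_cancel₀ habc.ne' e2])
    · exact h
  refine ⟨hb.symm, D c a y / D a b y, by positivity, ?_, ?_⟩
  · field_simp
    linear_combination -e1 - (y.1 - b.1) * hsum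
  · field_simp
    linear_combination -e2 - (y.2 - b.2) * hsum

/-! ### Triangles of guards -/

/-- `x` lies in the closed triangle `a b c`, whose vertices are listed counterclockwise. -/
def InTri (a b c x : ℝ × ℝ) : Prop := 0 ≤ D a b x ∧ 0 ≤ D b c x ∧ 0 ≤ D c a x

lemma D_cyc (a b c : ℝ × ℝ) : D b c a = D a b c := by simp only [D]; ring

lemma D_swap (a b c : ℝ × ℝ) : D b a c = - D a b c := by simp only [D]; ring

lemma D_swap' (a b c : ℝ × ℝ) : D a c b = - D a b c := by simp only [D]; ring

lemma D_self (a b : ℝ × ℝ) : D a b a = 0 ∧ D a b b = 0 := by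
  constructor <;> simp only [D] <;> ring

lemma D_sum (a b c x : ℝ × ℝ) : D a b x + D b c x + D c a x = D a b c := by
  simp only [D]; ring

/-- A convex combination of negative numbers is not zero. -/
lemma comb_ne_zero {u v w p q r : ℝ} (hu : 0 ≤ u) (hv : 0 ≤ v) (hw : 0 ≤ w)
    (hs : 0 < u + v + w) (hp : p < 0) (hq : q < 0) (hr : r < 0)
    (h : u * p + v * q + w * r = 0) : False := by
  have h1 : u * p ≤ 0 := mul_nonpos_of_nonneg_of_nonpos hu hp.le
  have h2 : v * q ≤ 0 := mul_nonpos_of_nonneg_of_nonpos hv hq.le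
  have h3 : w * r ≤ 0 := mul_nonpos_of_nonneg_of_nonpos hw hr.le
  have e1 : u = 0 := (mul_eq_zero.1 (by linarith : u * p = 0)).resolve_right hp.ne
  have e2 : v = 0 := (mul_eq_zero.1 (by linarith : v * q = 0)).resolve_right hq.ne
  have e3 : w = 0 := (mul_eq_zero.1 (by linarith : w * r = 0)).resolve_right hr.ne
  linarith

/-- If the line `x y` strictly separates `a` from `b` and `c`, then the rays from `b` through `x`
and from `c` through `y` meet inside the triangle. -/
lemma Good.tri_generic {S : Finset (ℝ × ℝ)} (hS : Good S) {a b c x y : ℝ × ℝ}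
    (ha : a ∈ S) (hb : b ∈ S) (hc : c ∈ S) (hx : x ∈ S) (hy : y ∈ S) (habc : 0 < D a b c)
    (tx : InTri a b c x) (ty : InTri a b c y) (sa : 0 < D x y a) (sb : D x y b < 0)
    (sc : D x y c < 0) : False := by
  have na := hS.nonneg a ha
  have nb := hS.nonneg b hb
  have nc := hS.nonneg c hc
  obtain ⟨x1, x2, x3⟩ := tx
  obtain ⟨y1, y2, y3⟩ := ty
  have hbc : b ≠ c := by
    rintro rfl; simp only [D] at habc; linarith
  have px : 0 < D b c x := by
    rcases x2.eq_or_lt with h | h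
    · exfalso
      -- here `x` is on the side `b c`, so `b` and `c` are not strictly on one side of `x y`
      have hs := D_sum a b c x
      have key : D c a x * D x y b + D a b x * D x y c + D b c x * D x y a = 0 := by
        simp only [D]; ring
      rw [← h] at hs key
      exact comb_ne_zero x3 x1 le_rfl (by linarith) sb sc neg_one_lt_zero
        (by linarith)
    · exact h
  have py : 0 < D b c y := by
    rcases y2.eq_or_lt with h | h
    · exfalso
      have hs := D_sum a b c y
      have key : D c a y * D x y b + D a b y * D x y c + D b c y * D x y a = 0 := by
        simp only [D]; ring
      rw [← h] at hs key
      exact comb_ne_zero y3 y1 le_rfl (by linarith) sb sc neg_one_lt_zero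
        (by linarith)
    · exact h
  have hbx : b ≠ x := by rintro rfl; rw [(D_self _ _).1] at px; exact lt_irrefl _ px
  have hcy : c ≠ y := by rintro rfl; rw [(D_self _ _).2] at py; exact lt_irrefl _ py
  have hw : D b c y * D a b c + D x y c * D a b c =
      D b c y * D a b x + D b c y * D b c x + D b c x * D c a y := by
    simp only [D]; ring
  have hwpos : 0 < D b c y - (- D x y c) := by
    by_contra hcon
    have : D b c y * D a b c + D x y c * D a b c ≤ 0 := by nlinarith
    have : 0 < D b c y * D b c x := by positivity
    have : 0 ≤ D b c y * D a b x := by positivity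
    have : 0 ≤ D b c x * D c a y := by positivity
    linarith
  -- barycentric coordinates of the meeting point
  have c1 : D a b c * (D b c y * x.1 - (- D x y c) * b.1) =
      D b c y * D b c x * a.1 + D b c x * D c a y * b.1 + D b c y * D a b x * c.1 := by
    simp only [D]; ring
  have c2 : D a b c * (D b c y * x.2 - (- D x y c) * b.2) =
      D b c y * D b c x * a.2 + D b c x * D c a y * b.2 + D b c y * D a b x * c.2 := by
    simp only [D]; ring
  refine hS.meet hb hx hc hy hbc hbx hcy (m := D b c y) (n := - D x y c) (m' := D b c x)
    (n' := - D x y b) (by linarith) (by linarith) ?_ hwpos ?_ ?_ ?_ ?_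
  · simp only [D]; ring
  · simp only [D]; ring
  · simp only [D]; ring
  · refine nonneg_of_mul_nonneg_right (c1 ▸ ?_) habc
    have := na.1; have := nb.1; have := nc.1
    positivity
  · refine nonneg_of_mul_nonneg_right (c2 ▸ ?_) habc
    have := na.2; have := nb.2; have := nc.2
    positivity

/-- `y` is on the line of the side `b c`, and `x` is strictly inside the triangle `a b c`. -/
def Deg (a b c x y : ℝ × ℝ) : Prop :=
  D b c y = 0 ∧ 0 < D a b x ∧ 0 < D b c x ∧ 0 < D c a x

/-- If `a`, `x`, `y` are collinear with `y` farther from `a`, then `y` is on the side opposite to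
`a`: otherwise the line would continue beyond `y` inside the triangle. -/
lemma Good.tri_collinear {S : Finset (ℝ × ℝ)} (hS : Good S) {a b c x y : ℝ × ℝ}
    (ha : a ∈ S) (hb : b ∈ S) (hc : c ∈ S) (hx : x ∈ S) (hy : y ∈ S) (habc : 0 < D a b c)
    (tx : InTri a b c x) (ty : InTri a b c y) (hxa : x ≠ a) (hyb : y ≠ b) (hyc : y ≠ c)
    (h0 : D x y a = 0) (hlt : D b c y < D b c x) : Deg a b c x y := by
  have na := hS.nonneg a ha
  have nb := hS.nonneg b hb
  have nc := hS.nonneg c hc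
  obtain ⟨x1, x2, x3⟩ := tx
  obtain ⟨y1, y2, y3⟩ := ty
  have hsx := D_sum a b c x
  have hsy := D_sum a b c y
  have hpos : 0 < D a b c - D b c x := by
    rcases (by linarith : 0 ≤ D a b c - D b c x).eq_or_lt with h | h
    · exfalso; apply hxa
      have z1 : D a b x = 0 := by linarith
      have z2 : D c a x = 0 := by linarith
      have e1 : D a b c * (x.1 - a.1) = D a b x * (c.1 - a.1) + D c a x * (b.1 - a.1) := by
        simp only [D]; ring
      have e2 : D a b c * (x.2 - a.2) = D a b x * (c.2 - a.2) + D c a x * (b.2 - a.2) := by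
        simp only [D]; ring
      rw [z1, z2] at e1 e2
      simp only [zero_mul, add_zero, mul_eq_zero, habc.ne', false_or] at e1 e2
      exact Prod.ext (by linarith) (by linarith)
    · exact h
  have hbey : Beyond a x y := by
    refine ⟨hxa.symm, (D b c x - D b c y) / (D a b c - D b c x),
      div_pos (by linarith) hpos, ?_, ?_⟩
    · field_simp
      have : (D a b c - D b c x) * (y.1 - x.1) - (D b c x - D b c y) * (x.1 - a.1) =
        (c.1 - b.1) * D x y a := by simp only [D]; ring
      rw [h0] at this
      linarith
    · field_simp
      have : (D a b c - D b c x) * (y.2 - x.2) - (D b c x - D b c y) * (x.2 - a.2) =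
        (c.2 - b.2) * D x y a := by simp only [D]; ring
      rw [h0] at this
      linarith
  have hl := hS.leave ha hx hy hbey
  have e1 : D a b c * y.1 = D b c y * a.1 + D c a y * b.1 + D a b y * c.1 := by
    simp only [D]; ring
  have e2 : D a b c * y.2 = D b c y * a.2 + D c a y * b.2 + D a b y * c.2 := by
    simp only [D]; ring
  obtain ⟨t, ht, t1, t2⟩ := hbey.2
  have hy0 : D b c y = 0 := by
    rcases y2.eq_or_lt with h | h
    · exact h.symm
    · exfalso
      rcases hl with ⟨z, p⟩ | ⟨z, p⟩
      · have pa : 0 < a.1 := by rw [z] at t1; nlinarith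
        have : 0 < D b c y * a.1 := by positivity
        have := nb.1; have := nc.1
        have : 0 ≤ D c a y * b.1 := by positivity
        have : 0 ≤ D a b y * c.1 := by positivity
        rw [z] at e1; linarith
      · have pa : 0 < a.2 := by rw [z] at t2; nlinarith
        have : 0 < D b c y * a.2 := by positivity
        have := nb.2; have := nc.2
        have : 0 ≤ D c a y * b.2 := by positivity
        have : 0 ≤ D a b y * c.2 := by positivity
        rw [z] at e2; linarith
  have f1 : D a b y = (1 + t) * D a b x := by simp only [D, t1, t2]; ring
  have f2 : D c a y = (1 + t) * D c a x := by simp only [D, t1, t2]; ring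
  refine ⟨hy0, ?_, by linarith, ?_⟩
  · rcases x1.eq_or_lt with h | h
    · exfalso; apply hyb
      rw [← h, mul_zero] at f1
      rw [hy0, f1] at e1 e2
      rw [hy0, f1] at hsy
      have hsy : D c a y = D a b c := by linarith
      rw [hsy] at e1 e2
      exact Prod.ext (mul_left_cancel₀ habc.ne' (by linarith))
        (mul_left_cancel₀ habc.ne' (by linarith))
    · exact h
  · rcases x3.eq_or_lt with h | h
    · exfalso; apply hyc
      rw [← h, mul_zero] at f2
      rw [hy0, f2] at e1 e2
      rw [hy0, f2] at hsy
      have hsy : D a b y = D a b c := by linarith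
      rw [hsy] at e1 e2
      exact Prod.ext (mul_left_cancel₀ habc.ne' (by linarith))
        (mul_left_cancel₀ habc.ne' (by linarith))
    · exact h

/-- Two further guards in a triangle of guards, on a line through the vertex `a`. -/
lemma Good.tri_collinear' {S : Finset (ℝ × ℝ)} (hS : Good S) {a b c x y : ℝ × ℝ}
    (ha : a ∈ S) (hb : b ∈ S) (hc : c ∈ S) (hx : x ∈ S) (hy : y ∈ S) (habc : 0 < D a b c)
    (tx : InTri a b c x) (ty : InTri a b c y) (hxy : x ≠ y)
    (hxa : x ≠ a) (hxb : x ≠ b) (hxc : x ≠ c) (hya : y ≠ a) (hyb : y ≠ b) (hyc : y ≠ c)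
    (h0 : D x y a = 0) : Deg a b c x y ∨ Deg a b c y x := by
  rcases lt_trichotomy (D b c x) (D b c y) with h | h | h
  · right
    exact hS.tri_collinear ha hb hc hy hx habc ty tx hya hxb hxc (by rw [D_swap, h0, neg_zero]) h
  · exfalso
    have f1 : (D a b c - D b c x) * (y.1 - x.1) - (D b c x - D b c y) * (x.1 - a.1) =
        (c.1 - b.1) * D x y a := by simp only [D]; ring
    have f2 : (D a b c - D b c x) * (y.2 - x.2) - (D b c x - D b c y) * (x.2 - a.2) =
        (c.2 - b.2) * D x y a := by simp only [D]; ring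
    rw [h0, ← h] at f1 f2
    simp only [sub_self, zero_mul, sub_zero, mul_zero, mul_eq_zero] at f1 f2
    have hne : D a b c - D b c x ≠ 0 := by
      intro hz
      apply hxa
      obtain ⟨x1, x2, x3⟩ := tx
      have hsx := D_sum a b c x
      have z1 : D a b x = 0 := by linarith
      have z2 : D c a x = 0 := by linarith
      have e1 : D a b c * (x.1 - a.1) = D a b x * (c.1 - a.1) + D c a x * (b.1 - a.1) := by
        simp only [D]; ring
      have e2 : D a b c * (x.2 - a.2) = D a b x * (c.2 - a.2) + D c a x * (b.2 - a.2) := by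
        simp only [D]; ring
      rw [z1, z2] at e1 e2
      simp only [zero_mul, add_zero, mul_eq_zero, habc.ne', false_or] at e1 e2
      exact Prod.ext (by linarith) (by linarith)
    exact hxy (Prod.ext (by linarith [f1.resolve_left hne]) (by linarith [f2.resolve_left hne]))
  · left
    exact hS.tri_collinear ha hb hc hx hy habc tx ty hxa hyb hyc h0 h

/-- Two further guards in a triangle of guards: one is strictly inside, the other is on the side
facing the vertex collinear with both. -/
lemma Good.tri_two {S : Finset (ℝ × ℝ)} (hS : Good S) {a b c x y : ℝ × ℝ}
    (ha : a ∈ S) (hb : b ∈ S) (hc : c ∈ S) (hx : x ∈ S) (hy : y ∈ S) (habc : 0 < D a b c)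
    (tx : InTri a b c x) (ty : InTri a b c y) (hxy : x ≠ y)
    (hxa : x ≠ a) (hxb : x ≠ b) (hxc : x ≠ c) (hya : y ≠ a) (hyb : y ≠ b) (hyc : y ≠ c) :
    (Deg a b c x y ∨ Deg a b c y x) ∨ (Deg b c a x y ∨ Deg b c a y x) ∨
      (Deg c a b x y ∨ Deg c a b y x) := by
  have hbca : 0 < D b c a := by rwa [D_cyc]
  have hcab : 0 < D c a b := by rwa [D_cyc, D_cyc]
  have tx' : InTri b c a x := ⟨tx.2.1, tx.2.2, tx.1⟩
  have ty' : InTri b c a y := ⟨ty.2.1, ty.2.2, ty.1⟩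
  have tx'' : InTri c a b x := ⟨tx.2.2, tx.1, tx.2.1⟩
  have ty'' : InTri c a b y := ⟨ty.2.2, ty.1, ty.2.1⟩
  have sa := D_swap x y a
  have sb := D_swap x y b
  have sc := D_swap x y c
  rcases lt_trichotomy (D x y a) 0 with h1 | h1 | h1
  swap
  · left
    exact hS.tri_collinear' ha hb hc hx hy habc tx ty hxy hxa hxb hxc hya hyb hyc h1
  all_goals
    rcases lt_trichotomy (D x y b) 0 with h2 | h2 | h2
    swap
    · right; left
      exact hS.tri_collinear' hb hc ha hx hy hbca tx' ty' hxy hxb hxc hxa hyb hyc hya h2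
  all_goals
    rcases lt_trichotomy (D x y c) 0 with h3 | h3 | h3
    swap
    · right; right
      exact hS.tri_collinear' hc ha hb hx hy hcab tx'' ty'' hxy hxc hxa hxb hyc hya hyb h3
  all_goals exfalso
  -- a line through a point of the triangle has vertices weakly on both sides
  all_goals
    have hs := D_sum a b c x
    have key : D c a x * D x y b + D a b x * D x y c + D b c x * D x y a = 0 := by
      simp only [D]; ring
    obtain ⟨x1, x2, x3⟩ := tx
    obtain ⟨y1, y2, y3⟩ := ty
  · exact comb_ne_zero x3 x1 x2 (by linarith) h2 h3 h1 key
  · exact hS.tri_generic hc ha hb hx hy hcab tx'' ty'' h3 h1 h2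
  · exact hS.tri_generic hb hc ha hx hy hbca tx' ty' h2 h3 h1
  · exact hS.tri_generic ha hb hc hy hx habc ⟨y1, y2, y3⟩ ⟨x1, x2, x3⟩
      (by linarith) (by linarith) (by linarith)
  · exact hS.tri_generic ha hb hc hx hy habc ⟨x1, x2, x3⟩ ⟨y1, y2, y3⟩ h1 h2 h3
  · exact hS.tri_generic hb hc ha hy hx hbca ty' tx' (by linarith) (by linarith) (by linarith)
  · exact hS.tri_generic hc ha hb hy hx hcab ty'' tx'' (by linarith) (by linarith) (by linarith)
  · exact comb_ne_zero (p := - D x y b) (q := - D x y c) (r := - D x y a) x3 x1 x2 (by linarith)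
      (by linarith) (by linarith) (by linarith) (by linarith)

/-- A triangle of guards contains at most two further guards. -/
lemma Good.tri_three {S : Finset (ℝ × ℝ)} (hS : Good S) {a b c x y z : ℝ × ℝ}
    (ha : a ∈ S) (hb : b ∈ S) (hc : c ∈ S) (hx : x ∈ S) (hy : y ∈ S) (hz : z ∈ S)
    (habc : 0 < D a b c)
    (tx : InTri a b c x) (ty : InTri a b c y) (tz : InTri a b c z)
    (hxy : x ≠ y) (hxz : x ≠ z) (hyz : y ≠ z)
    (hxa : x ≠ a) (hxb : x ≠ b) (hxc : x ≠ c) (hya : y ≠ a) (hyb : y ≠ b) (hyc : y ≠ c)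
    (hza : z ≠ a) (hzb : z ≠ b) (hzc : z ≠ c) : False := by
  -- among two of the guards exactly one is strictly inside
  let I : ℝ × ℝ → Prop := fun p => 0 < D a b p ∧ 0 < D b c p ∧ 0 < D c a p
  have key : ∀ p q : ℝ × ℝ, ((Deg a b c p q ∨ Deg a b c q p) ∨ (Deg b c a p q ∨ Deg b c a q p) ∨
      (Deg c a b p q ∨ Deg c a b q p)) → (I p ∧ ¬ I q) ∨ (I q ∧ ¬ I p) := by
    intro p q h
    simp only [I]
    rcases h with (⟨h, h1, h2, h3⟩ | ⟨h, h1, h2, h3⟩) | (⟨h, h1, h2, h3⟩ | ⟨h, h1, h2, h3⟩) |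
      (⟨h, h1, h2, h3⟩ | ⟨h, h1, h2, h3⟩)
    · exact Or.inl ⟨⟨h1, h2, h3⟩, fun k => by linarith [k.2.1]⟩
    · exact Or.inr ⟨⟨h1, h2, h3⟩, fun k => by linarith [k.2.1]⟩
    · exact Or.inl ⟨⟨h3, h1, h2⟩, fun k => by linarith [k.2.2]⟩
    · exact Or.inr ⟨⟨h3, h1, h2⟩, fun k => by linarith [k.2.2]⟩
    · exact Or.inl ⟨⟨h2, h3, h1⟩, fun k => by linarith [k.1]⟩
    · exact Or.inr ⟨⟨h2, h3, h1⟩, fun k => by linarith [k.1]⟩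
  have k1 := key x y (hS.tri_two ha hb hc hx hy habc tx ty hxy hxa hxb hxc hya hyb hyc)
  have k2 := key x z (hS.tri_two ha hb hc hx hz habc tx tz hxz hxa hxb hxc hza hzb hzc)
  have k3 := key y z (hS.tri_two ha hb hc hy hz habc ty tz hyz hya hyb hyc hza hzb hzc)
  tauto

/-- If the vertex `a` is on neither leg, two further guards in the triangle `a b c` force a guard
strictly between `b` and `c`. -/
lemma Good.tri_side {S : Finset (ℝ × ℝ)} (hS : Good S) {a b c x y : ℝ × ℝ}
    (ha : a ∈ S) (hb : b ∈ S) (hc : c ∈ S) (hx : x ∈ S) (hy : y ∈ S) (habc : 0 < D a b c)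
    (tx : InTri a b c x) (ty : InTri a b c y) (hxy : x ≠ y)
    (hxa : x ≠ a) (hxb : x ≠ b) (hxc : x ≠ c) (hya : y ≠ a) (hyb : y ≠ b) (hyc : y ≠ c)
    (ha1 : a.1 ≠ 0) (ha2 : a.2 ≠ 0) : ∃ z ∈ S, Beyond b z c := by
  have hbca : 0 < D b c a := by rwa [D_cyc]
  have hcab : 0 < D c a b := by rwa [D_cyc, D_cyc]
  rcases hS.tri_two ha hb hc hx hy habc tx ty hxy hxa hxb hxc hya hyb hyc with
    (h | h) | (h | h) | (h | h)
  · exact ⟨y, hy, beyond_of_side habc h.1 ty.1 ty.2.2 hyb hyc⟩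
  · exact ⟨x, hx, beyond_of_side habc h.1 tx.1 tx.2.2 hxb hxc⟩
  · rcases hS.ends hc hy ha (beyond_of_side hbca h.1 ty.2.1 ty.1 hyc hya) with k | k
    · exact absurd k.2.2.2 ha2
    · exact absurd k.2.2.2 ha1
  · rcases hS.ends hc hx ha (beyond_of_side hbca h.1 tx.2.1 tx.1 hxc hxa) with k | k
    · exact absurd k.2.2.2 ha2
    · exact absurd k.2.2.2 ha1
  · rcases hS.ends ha hy hb (beyond_of_side hcab h.1 ty.2.2 ty.2.1 hya hyb) with k | k
    · exact absurd k.1 ha1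
    · exact absurd k.1 ha2
  · rcases hS.ends ha hx hb (beyond_of_side hcab h.1 tx.2.2 tx.2.1 hxa hxb) with k | k
    · exact absurd k.1 ha1
    · exact absurd k.1 ha2

lemma Good.leg_aux {S : Finset (ℝ × ℝ)} (hS : Good S) {a b c : ℝ × ℝ}
    (ha : a ∈ S) (hb : b ∈ S) (hc : c ∈ S)
    (h : (a.1 = 0 ∧ b.1 = 0 ∧ c.1 = 0 ∧ a.2 < b.2 ∧ b.2 < c.2) ∨
      (a.2 = 0 ∧ b.2 = 0 ∧ c.2 = 0 ∧ a.1 < b.1 ∧ b.1 < c.1)) : False := by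
  rcases h with ⟨a0, b0, c0, h1, h2⟩ | ⟨a0, b0, c0, h1, h2⟩
  · have : Beyond a b c := by
      refine ⟨fun e => by rw [e] at h1; exact lt_irrefl _ h1, (c.2 - b.2) / (b.2 - a.2),
        div_pos (by linarith) (by linarith), by rw [a0, b0, c0]; ring, ?_⟩
      have : b.2 - a.2 ≠ 0 := by linarith
      field_simp
      ring
    rcases hS.mid ha hb hc this with ⟨p, q⟩
    linarith
  · have : Beyond a b c := by
      refine ⟨fun e => by rw [e] at h1; exact lt_irrefl _ h1, (c.1 - b.1) / (b.1 - a.1),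
        div_pos (by linarith) (by linarith), ?_, by rw [a0, b0, c0]; ring⟩
      have : b.1 - a.1 ≠ 0 := by linarith
      field_simp
      ring
    rcases hS.mid ha hb hc this with ⟨p, q⟩
    linarith

/-- At most two guards lie on the leg `x = 0`. -/
lemma Good.leg_fst {S : Finset (ℝ × ℝ)} (hS : Good S) :
    (S.filter (fun p => p.1 = 0)).card ≤ 2 := by
  by_contra! h
  obtain ⟨a, b, c, ha, hb, hc, hab, hac, hbc⟩ := Finset.two_lt_card_iff.1 h
  rw [Finset.mem_filter] at ha hb hc
  have hne : ∀ p q : ℝ × ℝ, p.1 = 0 → q.1 = 0 → p ≠ q → p.2 < q.2 ∨ q.2 < p.2 := by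
    intro p q hp hq h
    exact lt_or_gt_of_ne fun e => h (Prod.ext (hp.trans hq.symm) e)
  have aux := fun {a b c : ℝ × ℝ} (ha : a ∈ S ∧ a.1 = 0) (hb : b ∈ S ∧ b.1 = 0)
    (hc : c ∈ S ∧ c.1 = 0) (h1 : a.2 < b.2) (h2 : b.2 < c.2) =>
    hS.leg_aux ha.1 hb.1 hc.1 (Or.inl ⟨ha.2, hb.2, hc.2, h1, h2⟩)
  rcases hne a b ha.2 hb.2 hab with h1 | h1 <;> rcases hne a c ha.2 hc.2 hac with h2 | h2 <;>
    rcases hne b c hb.2 hc.2 hbc with h3 | h3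
  · exact aux ha hb hc h1 h3
  · exact aux ha hc hb h2 h3
  · linarith
  · exact aux hc ha hb h2 h1
  · exact aux hb ha hc h1 h2
  · linarith
  · exact aux hb hc ha h3 h2
  · exact aux hc hb ha h3 h1

/-- At most two guards lie on the leg `y = 0`. -/
lemma Good.leg_snd {S : Finset (ℝ × ℝ)} (hS : Good S) :
    (S.filter (fun p => p.2 = 0)).card ≤ 2 := by
  by_contra! h
  obtain ⟨a, b, c, ha, hb, hc, hab, hac, hbc⟩ := Finset.two_lt_card_iff.1 h
  rw [Finset.mem_filter] at ha hb hc
  have hne : ∀ p q : ℝ × ℝ, p.2 = 0 → q.2 = 0 → p ≠ q → p.1 < q.1 ∨ q.1 < p.1 := by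
    intro p q hp hq h
    exact lt_or_gt_of_ne fun e => h (Prod.ext e (hp.trans hq.symm))
  have aux := fun {a b c : ℝ × ℝ} (ha : a ∈ S ∧ a.2 = 0) (hb : b ∈ S ∧ b.2 = 0)
    (hc : c ∈ S ∧ c.2 = 0) (h1 : a.1 < b.1) (h2 : b.1 < c.1) =>
    hS.leg_aux ha.1 hb.1 hc.1 (Or.inr ⟨ha.2, hb.2, hc.2, h1, h2⟩)
  rcases hne a b ha.2 hb.2 hab with h1 | h1 <;> rcases hne a c ha.2 hc.2 hac with h2 | h2 <;>
    rcases hne b c hb.2 hc.2 hbc with h3 | h3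
  · exact aux ha hb hc h1 h3
  · exact aux ha hc hb h2 h3
  · linarith
  · exact aux hc ha hb h2 h1
  · exact aux hb ha hc h1 h2
  · linarith
  · exact aux hb hc ha h3 h2
  · exact aux hc hb ha h3 h1

/-! ### Vertices and edges of the convex hull -/

/-- `p → q` is an edge of the convex hull of `S`, oriented counterclockwise, and `p`, `q` are
extreme points: every other point of `S` is strictly to the left of `p q` or strictly between
`p` and `q`. -/
structure Edge (S : Finset (ℝ × ℝ)) (p q : ℝ × ℝ) : Prop where
  left_mem : p ∈ S
  right_mem : q ∈ S
  ne : p ≠ q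
  nonneg : ∀ g ∈ S, 0 ≤ D p q g
  zero : ∀ g ∈ S, D p q g = 0 → g = p ∨ g = q ∨ Beyond p g q

/-- The functional `(α, β)` attains its minimum over `S` at `p` only. -/
def Exposes (S : Finset (ℝ × ℝ)) (p : ℝ × ℝ) (α β : ℝ) : Prop :=
  ∀ g ∈ S, g ≠ p → 0 < α * (g.1 - p.1) + β * (g.2 - p.2)

/-- Around an exposed point `p` there is a point of `S` first (for `σ = 1`) or last
(for `σ = -1`) in angular order. -/
lemma exists_extreme {S : Finset (ℝ × ℝ)} {p : ℝ × ℝ} {α β : ℝ} (h : Exposes S p α β)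
    (hS : ∃ g ∈ S, g ≠ p) (σ : ℝ) (hσ : σ ≠ 0) :
    ∃ q ∈ S, q ≠ p ∧ ∀ g ∈ S, 0 ≤ σ * D p q g ∧ (D p q g = 0 → g = p ∨ g = q ∨ Beyond p g q) := by
  classical
  set l : ℝ × ℝ → ℝ := fun g => α * (g.1 - p.1) + β * (g.2 - p.2) with hl
  set m : ℝ × ℝ → ℝ := fun g => α * (g.2 - p.2) - β * (g.1 - p.1) with hm
  have hab : 0 < α ^ 2 + β ^ 2 := by
    obtain ⟨g, hg, hgp⟩ := hS
    have := h g hg hgp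
    by_contra hcon
    have ha : α = 0 := by nlinarith [sq_nonneg α, sq_nonneg β]
    have hb : β = 0 := by nlinarith [sq_nonneg α, sq_nonneg β]
    rw [ha, hb] at this
    linarith
  have hne : (S.erase p).Nonempty := by
    obtain ⟨g, hg, hgp⟩ := hS
    exact ⟨g, Finset.mem_erase.2 ⟨hgp, hg⟩⟩
  obtain ⟨q₀, hq₀, hmin⟩ := (S.erase p).exists_min_image (fun g => σ * (m g / l g)) hne
  obtain ⟨q, hq, hmax⟩ := ((S.erase p).filter
    (fun g => σ * (m g / l g) = σ * (m q₀ / l q₀))).exists_max_image l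
    ⟨q₀, Finset.mem_filter.2 ⟨hq₀, rfl⟩⟩
  rw [Finset.mem_filter, Finset.mem_erase] at hq
  obtain ⟨⟨hqp, hqS⟩, hq⟩ := hq
  have lq : 0 < l q := h q hqS hqp
  have hD : ∀ g, (α ^ 2 + β ^ 2) * D p q g = l q * m g - m q * l g := by
    intro g; simp only [hl, hm, D]; ring
  refine ⟨q, hqS, hqp, fun g hg => ?_⟩
  by_cases hgp : g = p
  · subst hgp
    exact ⟨by rw [(D_self g q).1]; simp, fun _ => Or.inl rfl⟩
  have lg : 0 < l g := h g hg hgp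
  have hge : g ∈ S.erase p := Finset.mem_erase.2 ⟨hgp, hg⟩
  constructor
  · have h1 := hmin g hge
    rw [← hq, ← sub_nonneg] at h1
    have h2 : (α ^ 2 + β ^ 2) * (σ * D p q g) =
        (σ * (m g / l g) - σ * (m q / l q)) * (l q * l g) := by
      have := hD g
      field_simp
      linear_combination this
    have h3 : 0 ≤ (α ^ 2 + β ^ 2) * (σ * D p q g) := by rw [h2]; positivity
    exact nonneg_of_mul_nonneg_right h3 hab
  · intro h0
    right
    have h1 := hD g
    rw [h0, mul_zero] at h1
    have hr : m g / l g = m q / l q := by field_simp; linarith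
    have h2 : l g ≤ l q := hmax g (Finset.mem_filter.2 ⟨hge, by rw [hr, hq]⟩)
    have k1 : l q * (g.1 - p.1) = l g * (q.1 - p.1) := by
      have : l q * (g.1 - p.1) - l g * (q.1 - p.1) = - β * D p q g := by
        simp only [hl, D]; ring
      rw [h0] at this; linarith
    have k2 : l q * (g.2 - p.2) = l g * (q.2 - p.2) := by
      have : l q * (g.2 - p.2) - l g * (q.2 - p.2) = α * D p q g := by
        simp only [hl, D]; ring
      rw [h0] at this; linarith
    rcases h2.eq_or_lt with h2 | h2
    · left
      rw [h2] at k1 k2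
      exact Prod.ext (by linarith [mul_left_cancel₀ lq.ne' k1])
        (by linarith [mul_left_cancel₀ lq.ne' k2])
    · right
      refine ⟨Ne.symm hgp, (l q - l g) / l g, div_pos (by linarith) lg, ?_, ?_⟩
      · field_simp
        linarith
      · field_simp
        linarith

lemma Exposes.exists_next {S : Finset (ℝ × ℝ)} {p : ℝ × ℝ} {α β : ℝ} (h : Exposes S p α β)
    (hp : p ∈ S) (hS : ∃ g ∈ S, g ≠ p) : ∃ q, Edge S p q := by
  obtain ⟨q, hq, hne, H⟩ := exists_extreme h hS 1 one_ne_zero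
  exact ⟨q, hp, hq, hne.symm, fun g hg => by simpa using (H g hg).1, fun g hg => (H g hg).2⟩

lemma Exposes.exists_prev {S : Finset (ℝ × ℝ)} {p : ℝ × ℝ} {α β : ℝ} (h : Exposes S p α β)
    (hp : p ∈ S) (hS : ∃ g ∈ S, g ≠ p) : ∃ q, Edge S q p := by
  obtain ⟨q, hq, hne, H⟩ := exists_extreme h hS (-1) (by norm_num)
  refine ⟨q, hq, hp, hne, fun g hg => ?_, fun g hg h0 => ?_⟩
  · have := (H g hg).1
    rw [D_swap]; linarith
  · rw [D_swap, neg_eq_zero] at h0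
    rcases (H g hg).2 h0 with h | h | h
    · exact Or.inr (Or.inl h)
    · exact Or.inl h
    · exact Or.inr (Or.inr h.symm)

/-- Both ends of a hull edge are exposed: tilt the edge functional slightly. -/
lemma Edge.exposes {S : Finset (ℝ × ℝ)} {p q : ℝ × ℝ} (h : Edge S p q) :
    (∃ α β, Exposes S p α β) ∧ (∃ α β, Exposes S q α β) := by
  classical
  set d : ℝ × ℝ → ℝ := fun g => (q.1 - p.1) * (g.1 - p.1) + (q.2 - p.2) * (g.2 - p.2) with hd
  set e : ℝ × ℝ → ℝ := fun g => (q.1 - p.1) * (g.1 - q.1) + (q.2 - p.2) * (g.2 - q.2) with he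
  have hpq : 0 < (q.1 - p.1) ^ 2 + (q.2 - p.2) ^ 2 := by
    by_contra hcon
    have h1 : q.1 - p.1 = 0 := by nlinarith [sq_nonneg (q.1 - p.1), sq_nonneg (q.2 - p.2)]
    have h2 : q.2 - p.2 = 0 := by nlinarith [sq_nonneg (q.1 - p.1), sq_nonneg (q.2 - p.2)]
    exact h.ne (Prod.ext (by linarith) (by linarith))
  obtain ⟨M, hM⟩ := (S.image (fun g => max (- d g / D p q g) (e g / D p q g))).exists_le
  have hM' : ∀ g ∈ S, max (- d g / D p q g) (e g / D p q g) ≤ M := fun g hg =>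
    hM _ (Finset.mem_image_of_mem _ hg)
  constructor
  · refine ⟨- (M + 1) * (q.2 - p.2) + (q.1 - p.1), (M + 1) * (q.1 - p.1) + (q.2 - p.2),
      fun g hg hgp => ?_⟩
    have : (- (M + 1) * (q.2 - p.2) + (q.1 - p.1)) * (g.1 - p.1) +
        ((M + 1) * (q.1 - p.1) + (q.2 - p.2)) * (g.2 - p.2) = (M + 1) * D p q g + d g := by
      simp only [hd, D]; ring
    rw [this]
    rcases (h.nonneg g hg).eq_or_lt with h0 | h0
    · rw [← h0, mul_zero, zero_add]
      rcases h.zero g hg h0.symm with rfl | rfl | hb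
      · exact absurd rfl hgp
      · simp only [hd]; nlinarith
      · obtain ⟨-, t, ht, h1, h2⟩ := hb
        have : (1 + t) * d g = (q.1 - p.1) ^ 2 + (q.2 - p.2) ^ 2 := by
          simp only [hd]; rw [h1, h2]; ring
        have ht : 0 < 1 + t := by linarith
        exact pos_of_mul_pos_right (this ▸ hpq) ht.le
    · have := (le_max_left _ _).trans (hM' g hg)
      rw [div_le_iff₀ h0] at this
      linarith
  · refine ⟨- (M + 1) * (q.2 - p.2) - (q.1 - p.1), (M + 1) * (q.1 - p.1) - (q.2 - p.2),
      fun g hg hgq => ?_⟩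
    have : (- (M + 1) * (q.2 - p.2) - (q.1 - p.1)) * (g.1 - q.1) +
        ((M + 1) * (q.1 - p.1) - (q.2 - p.2)) * (g.2 - q.2) = (M + 1) * D p q g - e g := by
      simp only [he, D]; ring
    rw [this]
    rcases (h.nonneg g hg).eq_or_lt with h0 | h0
    · rw [← h0, mul_zero, zero_sub]
      rcases h.zero g hg h0.symm with rfl | rfl | hb
      · simp only [he]; nlinarith
      · exact absurd rfl hgq
      · obtain ⟨-, t, ht, h1, h2⟩ := hb.symm
        have : (1 + t) * - e g = (q.1 - p.1) ^ 2 + (q.2 - p.2) ^ 2 := by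
          simp only [he]; rw [h1, h2]; ring
        have ht : 0 < 1 + t := by linarith
        exact pos_of_mul_pos_right (this ▸ hpq) ht.le
    · have := (le_max_right _ _).trans (hM' g hg)
      rw [div_le_iff₀ h0] at this
      linarith

open Classical in
/-- The vertices of the convex hull of `S`. -/
def hullV (S : Finset (ℝ × ℝ)) : Finset (ℝ × ℝ) := S.filter (fun p => ∃ q, Edge S p q)

lemma mem_hullV {S : Finset (ℝ × ℝ)} {p : ℝ × ℝ} : p ∈ hullV S ↔ p ∈ S ∧ ∃ q, Edge S p q := by
  simp [hullV]

lemma Edge.left_mem' {S : Finset (ℝ × ℝ)} {p q : ℝ × ℝ} (h : Edge S p q) : p ∈ hullV S :=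
  mem_hullV.2 ⟨h.left_mem, q, h⟩

lemma Edge.right_mem' {S : Finset (ℝ × ℝ)} {p q : ℝ × ℝ} (h : Edge S p q) : q ∈ hullV S := by
  obtain ⟨α, β, he⟩ := h.exposes.2
  exact mem_hullV.2 ⟨h.right_mem, he.exists_next h.right_mem ⟨p, h.left_mem, h.ne⟩⟩

lemma exists_prev {S : Finset (ℝ × ℝ)} {p : ℝ × ℝ} (hp : p ∈ hullV S) : ∃ r, Edge S r p := by
  obtain ⟨hpS, q, h⟩ := mem_hullV.1 hp
  obtain ⟨α, β, he⟩ := h.exposes.1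
  exact he.exists_prev hpS ⟨q, h.right_mem, h.ne.symm⟩

lemma exists_next {S : Finset (ℝ × ℝ)} {p : ℝ × ℝ} (hp : p ∈ hullV S) : ∃ r, Edge S p r :=
  (mem_hullV.1 hp).2

lemma exposes_of_mem {S : Finset (ℝ × ℝ)} {p : ℝ × ℝ} (hp : p ∈ hullV S) :
    ∃ α β, Exposes S p α β :=
  (mem_hullV.1 hp).2.elim fun _ h => h.exposes.1

lemma Beyond.not_swap {p q r : ℝ × ℝ} (h : Beyond p q r) (h' : Beyond p r q) : False := by
  obtain ⟨hne, t, ht, h1, h2⟩ := h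
  obtain ⟨-, s, hs, h3, h4⟩ := h'
  apply hne
  have e1 : (t + s + t * s) * (q.1 - p.1) = 0 := by rw [h1] at h3; linarith
  have e2 : (t + s + t * s) * (q.2 - p.2) = 0 := by rw [h2] at h4; linarith
  have hp : t + s + t * s ≠ 0 := by positivity
  exact Prod.ext (by linarith [(mul_eq_zero.1 e1).resolve_left hp])
    (by linarith [(mul_eq_zero.1 e2).resolve_left hp])

lemma Edge.next_unique {S : Finset (ℝ × ℝ)} {p q q' : ℝ × ℝ} (h : Edge S p q)
    (h' : Edge S p q') : q = q' := by
  have h1 := h.nonneg q' h'.right_mem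
  have h2 := h'.nonneg q h.right_mem
  rw [D_swap'] at h2
  have h0 : D p q q' = 0 := by linarith
  have h0' : D p q' q = 0 := by rw [D_swap']; linarith
  rcases h.zero q' h'.right_mem h0 with e | e | e
  · exact absurd e.symm h'.ne
  · exact e.symm
  rcases h'.zero q h.right_mem h0' with e' | e' | e'
  · exact absurd e'.symm h.ne
  · exact e'
  exact (e.not_swap e').elim

lemma Edge.prev_unique {S : Finset (ℝ × ℝ)} {p q q' : ℝ × ℝ} (h : Edge S q p)
    (h' : Edge S q' p) : q = q' := by
  have h1 := h.nonneg q' h'.left_mem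
  have h2 := h'.nonneg q h.left_mem
  have h3 : D q' p q = - D q p q' := by rw [← D_cyc, D_swap, D_cyc]
  have h0 : D q p q' = 0 := by linarith
  have h0' : D q' p q = 0 := by linarith
  rcases h.zero q' h'.left_mem h0 with e | e | e
  · exact e.symm
  · exact absurd e h'.ne
  rcases h'.zero q h.left_mem h0' with e' | e' | e'
  · exact e'
  · exact absurd e' h.ne
  exact (e.symm.not_swap e'.symm).elim

/-- A hull vertex is strictly to the left of every hull edge not containing it. -/
lemma Edge.pos {S : Finset (ℝ × ℝ)} {p q v : ℝ × ℝ} (h : Edge S p q) (hv : v ∈ hullV S)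
    (hp : v ≠ p) (hq : v ≠ q) : 0 < D p q v := by
  have hvS := (mem_hullV.1 hv).1
  rcases (h.nonneg v hvS).eq_or_lt with h0 | h0
  · exfalso
    rcases h.zero v hvS h0.symm with e | e | e
    · exact hp e
    · exact hq e
    obtain ⟨α, β, he⟩ := exposes_of_mem hv
    have h1 := he p h.left_mem hp.symm
    have h2 := he q h.right_mem hq.symm
    obtain ⟨-, t, ht, e1, e2⟩ := e
    rw [e1, e2] at h2
    have : 0 < t * (α * (p.1 - v.1) + β * (p.2 - v.2)) := by positivity
    linarith
  · exact h0

/-- A hull vertex in a triangle of guards is one of its vertices. -/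
lemma vertex_in_tri {S : Finset (ℝ × ℝ)} {a b c v : ℝ × ℝ} (hv : v ∈ hullV S) (ha : a ∈ S)
    (hb : b ∈ S) (hc : c ∈ S) (habc : 0 < D a b c) (ht : InTri a b c v) :
    v = a ∨ v = b ∨ v = c := by
  by_contra! hcon
  obtain ⟨α, β, he⟩ := exposes_of_mem hv
  have h1 := he a ha hcon.1.symm
  have h2 := he b hb hcon.2.1.symm
  have h3 := he c hc hcon.2.2.symm
  refine comb_ne_zero ht.2.1 ht.2.2 ht.1 (by linarith [D_sum a b c v]) (neg_neg_of_pos h1)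
    (neg_neg_of_pos h2) (neg_neg_of_pos h3) ?_
  simp only [D]; ring

lemma hullV_nonempty {S : Finset (ℝ × ℝ)} (h : 1 < S.card) : (hullV S).Nonempty := by
  obtain ⟨p, hp, hmax⟩ := S.exists_max_image (fun p => p.1 ^ 2 + p.2 ^ 2)
    (Finset.card_pos.1 (by omega))
  obtain ⟨g, hg, hgp⟩ := Finset.exists_mem_ne h p
  have he : Exposes S p (-p.1) (-p.2) := by
    intro g hg hne
    have h1 := hmax g hg
    have h2 : 0 < (g.1 - p.1) ^ 2 + (g.2 - p.2) ^ 2 := by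
      by_contra hcon
      have e1 : g.1 - p.1 = 0 := by nlinarith [sq_nonneg (g.1 - p.1), sq_nonneg (g.2 - p.2)]
      have e2 : g.2 - p.2 = 0 := by nlinarith [sq_nonneg (g.1 - p.1), sq_nonneg (g.2 - p.2)]
      exact hne (Prod.ext (by linarith) (by linarith))
    nlinarith
  obtain ⟨q, hq⟩ := he.exists_next hp ⟨g, hg, hgp⟩
  exact ⟨p, hq.left_mem'⟩

/-! ### At most six hull vertices -/

lemma no_two_cycle {S : Finset (ℝ × ℝ)} (hV : 2 < (hullV S).card) {a b : ℝ × ℝ}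
    (h : Edge S a b) (h' : Edge S b a) : False := by
  classical
  obtain ⟨v, hv, hn⟩ := Finset.exists_mem_notMem_of_card_lt_card
    (Finset.card_le_two (a := a) (b := b) |>.trans_lt hV)
  simp only [Finset.mem_insert, Finset.mem_singleton, not_or] at hn
  have h1 := h.pos hv hn.1 hn.2
  have h2 := h'.pos hv hn.2 hn.1
  rw [D_swap] at h2
  linarith

lemma no_three_cycle {S : Finset (ℝ × ℝ)} (hV : 3 < (hullV S).card) {a b c : ℝ × ℝ}
    (h : Edge S a b) (h' : Edge S b c) (h'' : Edge S c a) : False := by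
  classical
  obtain ⟨v, hv, hn⟩ := Finset.exists_mem_notMem_of_card_lt_card
    (Finset.card_le_three (a := a) (b := b) (c := c) |>.trans_lt hV)
  simp only [Finset.mem_insert, Finset.mem_singleton, not_or] at hn
  have h1 := h.pos hv hn.1 hn.2.1
  have h2 := h'.pos hv hn.2.1 hn.2.2
  have h3 := h''.pos hv hn.2.2 hn.1
  have := vertex_in_tri hv h.left_mem h'.left_mem h''.left_mem
    (by rw [← D_sum a b c v]; positivity) ⟨h1.le, h2.le, h3.le⟩
  tauto

lemma no_four_cycle {S : Finset (ℝ × ℝ)} (hV : 4 < (hullV S).card) {a b c d : ℝ × ℝ}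
    (hab : Edge S a b) (hbc : Edge S b c) (hcd : Edge S c d) (hda : Edge S d a) : False := by
  classical
  obtain ⟨v, hv, hn⟩ := Finset.exists_mem_notMem_of_card_lt_card
    (Finset.card_le_four (a := a) (b := b) (c := c) (d := d) |>.trans_lt hV)
  simp only [Finset.mem_insert, Finset.mem_singleton, not_or] at hn
  obtain ⟨na, nb, nc, nd⟩ := hn
  have h1 := hab.pos hv na nb
  have h2 := hbc.pos hv nb nc
  have h3 := hcd.pos hv nc nd
  have h4 := hda.pos hv nd na
  have hac : a ≠ c := by
    rintro rfl
    exact no_two_cycle (by omega) hab hbc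
  rcases le_total 0 (D a c v) with h0 | h0
  · have := vertex_in_tri hv hab.left_mem hcd.left_mem hda.left_mem
      (by rw [← D_sum a c d v]; positivity) ⟨h0, h3.le, h4.le⟩
    tauto
  · have h0' : 0 ≤ D c a v := by rw [D_swap]; linarith
    have := vertex_in_tri hv hab.left_mem hbc.left_mem hcd.left_mem
      (by rw [← D_sum a b c v]; positivity) ⟨h1.le, h2.le, h0'⟩
    tauto

/-- Four consecutive vertices of the convex hull. -/
structure Chain (S : Finset (ℝ × ℝ)) (a b c d : ℝ × ℝ) : Prop where
  ab : Edge S a b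
  bc : Edge S b c
  cd : Edge S c d

lemma Chain.ne {S : Finset (ℝ × ℝ)} (hV : 4 < (hullV S).card) {a b c d : ℝ × ℝ}
    (h : Chain S a b c d) : a ≠ c ∧ b ≠ d ∧ a ≠ d := by
  refine ⟨?_, ?_, ?_⟩
  · rintro rfl
    exact no_two_cycle (by omega) h.ab h.bc
  · rintro rfl
    exact no_two_cycle (by omega) h.bc h.cd
  · rintro rfl
    exact no_three_cycle (by omega) h.ab h.bc h.cd

lemma Chain.pos {S : Finset (ℝ × ℝ)} (hV : 4 < (hullV S).card) {a b c d : ℝ × ℝ}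
    (h : Chain S a b c d) : 0 < D a b c ∧ 0 < D b c d := by
  obtain ⟨h1, h2, h3⟩ := h.ne hV
  exact ⟨h.ab.pos h.bc.right_mem' h1.symm h.bc.ne.symm,
    h.bc.pos h.cd.right_mem' h2.symm h.cd.ne.symm⟩

lemma exists_chain {S : Finset (ℝ × ℝ)} {b : ℝ × ℝ} (hb : b ∈ hullV S) :
    ∃ a c d, Chain S a b c d := by
  obtain ⟨a, ha⟩ := exists_prev hb
  obtain ⟨c, hc⟩ := exists_next hb
  obtain ⟨d, hd⟩ := exists_next hc.right_mem'
  exact ⟨a, c, d, ha, hc, hd⟩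

/-- The affine function with coefficients `k`, constant term last. -/
def aff (k : ℝ × ℝ × ℝ) (p : ℝ × ℝ) : ℝ := k.1 * p.1 + k.2.1 * p.2 + k.2.2

/-- The value of the affine function `k`, up to the positive or negative scale
`tip (0, 0, 1)`, at the point where the lines `a b` and `c d` meet. -/
def tip (k : ℝ × ℝ × ℝ) (a b c d : ℝ × ℝ) : ℝ := aff k b * D a c d - aff k a * D b c d

lemma tip_eq (k : ℝ × ℝ × ℝ) (a b c d : ℝ × ℝ) :
    tip k a b c d = aff k c * D a b d - aff k d * D a b c := by
  simp only [tip, aff, D]; ring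

lemma tip_eq' (k : ℝ × ℝ × ℝ) (a b c d v : ℝ × ℝ) :
    tip k a b c d * D b c v + D b c d * D a b c * aff k v =
      D b c d * D a b v * aff k c + D a b c * D c d v * aff k b := by
  simp only [tip, aff, D]; ring

/-- The lines extending the two neighbours of a hull edge do not meet, beyond that edge, inside
the quadrant: the point where they meet would be hidden from both `a` and `d`. -/
lemma Good.ear {S : Finset (ℝ × ℝ)} (hS : Good S) (hV : 4 < (hullV S).card) {a b c d : ℝ × ℝ}
    (h : Chain S a b c d) :
    tip (1, 0, 0) a b c d < 0 ∨ tip (0, 1, 0) a b c d < 0 ∨ tip (0, 0, 1) a b c d ≤ 0 := by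
  by_contra! hcon
  obtain ⟨h1, h2, h3⟩ := hcon
  obtain ⟨p1, p2⟩ := h.pos hV
  refine hS.meet h.ab.left_mem h.bc.left_mem h.cd.right_mem h.cd.left_mem (h.ne hV).2.2
    h.ab.ne h.cd.ne.symm (m := D a c d) (n := D b c d) (m' := D a b d) (n' := D a b c)
    p2 p1 ?_ ?_ ?_ ?_ ?_ ?_
  · simp only [D]; ring
  · simp only [tip, aff] at h3; linarith
  · simp only [D]; ring
  · simp only [D]; ring
  · simp only [tip, aff] at h1; linarith
  · simp only [tip, aff] at h2; linarith

/-- For two hull edges without a common vertex, a positive combination of the two functionals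
`tip` is a nonnegative combination of point evaluations at hull vertices. -/
lemma tip_combination {S : Finset (ℝ × ℝ)} (hV : 4 < (hullV S).card)
    {a b c d a' b' c' d' : ℝ × ℝ} (h : Chain S a b c d) (h' : Chain S a' b' c' d')
    (n1 : b ≠ b') (n2 : b ≠ c') (n3 : c ≠ b') :
    ∃ l m P Q : ℝ, 0 < l ∧ 0 < m ∧ 0 ≤ P ∧ 0 ≤ Q ∧ 0 < P + Q ∧
      ∀ k, l * tip k a b c d + m * tip k a' b' c' d' = P * aff k c + Q * aff k b := by
  obtain ⟨ac, bd, ad⟩ := h.ne hV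
  obtain ⟨ac', bd', ad'⟩ := h'.ne hV
  obtain ⟨p1, p2⟩ := h.pos hV
  obtain ⟨p1', p2'⟩ := h'.pos hV
  have hb := h.bc.left_mem'
  have hc := h.bc.right_mem'
  have hb' := h'.bc.left_mem'
  have hc' := h'.bc.right_mem'
  have n4 : c ≠ c' := by
    rintro rfl
    exact n1 (h'.bc.prev_unique h.bc).symm
  -- `tip` on the second chain of the signed distance from the line `p q`
  set R : ℝ × ℝ → ℝ × ℝ → ℝ := fun p q => D p q b' * D a' c' d' - D p q a' * D b' c' d' with hR
  have key : ∀ p q v, R p q * D b' c' v + D b' c' d' * D a' b' c' * D p q v =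
      D b' c' d' * D a' b' v * D p q c' + D a' b' c' * D c' d' v * D p q b' := by
    intro p q v; simp only [hR, D]; ring
  have sb : 0 < D b' c' b := h'.bc.pos hb n1 n2
  have sc : 0 < D b' c' c := h'.bc.pos hc n3 n4
  have nn := fun {p q} (e : Edge S p q) {g} (hg : g ∈ hullV S) => e.nonneg g (mem_hullV.1 hg).1
  have hl : 0 < R b c := by
    have k1 := key b c b
    rw [(D_self b c).1, mul_zero, add_zero] at k1
    refine pos_of_mul_pos_left (k1 ▸ ?_) sb.le
    have e1 := h.bc.pos hb' n1.symm n3.symm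
    have e2 := nn h'.ab hb
    have e3 := nn h.bc hc'
    have e4 := nn h'.cd hb
    by_cases hbd : b = d'
    · have e5 := h'.ab.pos hb (by rw [hbd]; exact ad'.symm) n1
      have e6 := h.bc.pos hc' n2.symm n4.symm
      positivity
    · have e5 := h'.cd.pos hb n2 hbd
      positivity
  have hP : 0 ≤ R a b ∧ (a ≠ c' → 0 < R a b) := by
    have k1 := key a b b
    rw [(D_self a b).2, mul_zero, add_zero] at k1
    have e1 := nn h.ab hb'
    have e2 := nn h'.ab hb
    have e3 := nn h.ab hc'
    have e4 := nn h'.cd hb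
    constructor
    · refine nonneg_of_mul_nonneg_left (k1 ▸ ?_) sb
      positivity
    · intro hne
      refine pos_of_mul_pos_left (k1 ▸ ?_) sb.le
      have e5 := h.ab.pos hc' hne.symm n2.symm
      by_cases hba : b = a'
      · have e6 := h'.cd.pos hb n2 (by rw [hba]; exact ad')
        have e7 : 0 < D a b b' := h.ab.pos hb' (by
          intro e
          refine no_two_cycle (by omega) h.ab (b := b) ?_
          rw [hba, ← e]
          exact h'.ab) n1.symm
        positivity
      · have e6 := h'.ab.pos hb hba n1
        positivity
  have hQ : 0 ≤ R c d ∧ (d ≠ b' → 0 < R c d) := by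
    have k1 := key c d c
    rw [(D_self c d).1, mul_zero, add_zero] at k1
    have e1 := nn h.cd hb'
    have e2 := nn h'.ab hc
    have e3 := nn h.cd hc'
    have e4 := nn h'.cd hc
    constructor
    · refine nonneg_of_mul_nonneg_left (k1 ▸ ?_) sc
      positivity
    · intro hne
      refine pos_of_mul_pos_left (k1 ▸ ?_) sc.le
      have e5 := h.cd.pos hb' n3.symm hne.symm
      by_cases hcd : c = d'
      · have e6 := h'.ab.pos hc (by rw [hcd]; exact ad'.symm) n3
        have e7 : 0 < D c d c' := h.cd.pos hc' n4.symm (by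
          intro e
          refine no_two_cycle (by omega) h.cd (b := d) ?_
          rw [hcd, ← e]
          exact h'.cd)
        positivity
      · have e6 := h'.cd.pos hc n4 hcd
        positivity
  refine ⟨R b c, D b c d * D a b c, D b c d * R a b, D a b c * R c d, hl, by positivity,
    mul_nonneg p2.le hP.1, mul_nonneg p1.le hQ.1, ?_, ?_⟩
  · by_cases e1 : a = c'
    · have hne : d ≠ b' := by
        intro e2
        refine no_four_cycle hV h.ab h.bc h.cd (d := d) ?_
        rw [e1, e2]
        exact h'.bc
      exact add_pos_of_nonneg_of_pos (mul_nonneg p2.le hP.1) (mul_pos p1 (hQ.2 hne))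
    · exact add_pos_of_pos_of_nonneg (mul_pos p2 (hP.2 e1)) (mul_nonneg p1.le hQ.1)
  · intro k
    have i1 := tip_eq' k a b c d b'
    have i2 := tip_eq' k a b c d a'
    simp only [hR]
    have i3 : tip k a' b' c' d' = aff k b' * D a' c' d' - aff k a' * D b' c' d' := rfl
    rw [i3]
    have i4 := congrArg (D a' c' d' * ·) i1
    have i5 := congrArg (D b' c' d' * ·) i2
    linear_combination i4 - i5

/-- `b` is a hull vertex such that the meeting point of the lines through the hull edges before
and after the edge starting at `b` violates the constraint given by the affine function `k`. The
predicate `Q` on the homogeneous value `tip` says what violation means: `· < 0` for the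
constraints `0 ≤ x` and `0 ≤ y`, and `· ≤ 0` for `k = 1`, that is, for the requirement that the
point exists and lies on the outer side of the edge. -/
def Viol (S : Finset (ℝ × ℝ)) (k : ℝ × ℝ × ℝ) (Q : ℝ → Prop) (b : ℝ × ℝ) : Prop :=
  b ∈ hullV S ∧ ∃ a c d, Chain S a b c d ∧ Q (tip k a b c d)

/-- Two hull edges violating the same constraint are adjacent: otherwise `tip_combination` writes a
positive combination of their two `tip` values as a nonnegative combination of values at guards. -/
lemma Viol.adj {S : Finset (ℝ × ℝ)} (hV : 4 < (hullV S).card) {k : ℝ × ℝ × ℝ} {Q : ℝ → Prop}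
    (hk : (∀ p ∈ S, 0 ≤ aff k p) ∧ (∀ t, Q t → t < 0) ∨
      (∀ p ∈ S, 0 < aff k p) ∧ (∀ t, Q t → t ≤ 0)) {b b' : ℝ × ℝ}
    (h : Viol S k Q b) (h' : Viol S k Q b') (hne : b ≠ b') : Edge S b b' ∨ Edge S b' b := by
  obtain ⟨hb, a, c, d, hc, hq⟩ := h
  obtain ⟨hb', a', c', d', hc', hq'⟩ := h'
  by_cases n2 : b = c'
  · exact Or.inr (n2 ▸ hc'.bc)
  by_cases n3 : c = b'
  · exact Or.inl (n3 ▸ hc.bc)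
  exfalso
  obtain ⟨l, m, P, R, hl, hm, hP, hR, hPR, H⟩ := tip_combination hV hc hc' hne n2 n3
  have H := H k
  rcases hk with ⟨h1, h2⟩ | ⟨h1, h2⟩
  · have a1 := mul_nonneg hP (h1 c hc.cd.left_mem)
    have a2 := mul_nonneg hR (h1 b hc.bc.left_mem)
    have a3 := mul_neg_of_pos_of_neg hl (h2 _ hq)
    have a4 := mul_neg_of_pos_of_neg hm (h2 _ hq')
    linarith
  · have a1 := mul_nonneg hP (h1 c hc.cd.left_mem).le
    have a2 := mul_nonneg hR (h1 b hc.bc.left_mem).le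
    have a3 := mul_nonpos_of_nonneg_of_nonpos hl.le (h2 _ hq)
    have a4 := mul_nonpos_of_nonneg_of_nonpos hm.le (h2 _ hq')
    have b1 : P = 0 := (mul_eq_zero.1 (by linarith)).resolve_right (h1 c hc.cd.left_mem).ne'
    have b2 : R = 0 := (mul_eq_zero.1 (by linarith)).resolve_right (h1 b hc.bc.left_mem).ne'
    linarith

/-- A cycle of length at least four contains no three pairwise adjacent vertices. -/
lemma card_le_two_of_adj {S T : Finset (ℝ × ℝ)} (hV : 3 < (hullV S).card)
    (h : ∀ b ∈ T, ∀ b' ∈ T, b ≠ b' → Edge S b b' ∨ Edge S b' b) : T.card ≤ 2 := by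
  by_contra! hc
  obtain ⟨x, y, z, hx, hy, hz, hxy, hxz, hyz⟩ := Finset.two_lt_card_iff.1 hc
  rcases h x hx y hy hxy with e1 | e1 <;> rcases h x hx z hz hxz with e2 | e2 <;>
    rcases h y hy z hz hyz with e3 | e3
  · exact hyz (e1.next_unique e2)
  · exact hyz (e1.next_unique e2)
  · exact no_three_cycle hV e1 e3 e2
  · exact hxz (e1.prev_unique e3)
  · exact hxz (e1.next_unique e3)
  · exact no_three_cycle hV e2 e3 e1
  · exact hyz (e1.prev_unique e2)
  · exact hyz (e1.prev_unique e2)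

open Classical in
/-- The finite set of the vertices `b` with `Viol S k Q b`. -/
def violators (S : Finset (ℝ × ℝ)) (k : ℝ × ℝ × ℝ) (Q : ℝ → Prop) : Finset (ℝ × ℝ) :=
  (hullV S).filter (Viol S k Q)

lemma mem_violators {S : Finset (ℝ × ℝ)} {k : ℝ × ℝ × ℝ} {Q : ℝ → Prop} {b : ℝ × ℝ} :
    b ∈ violators S k Q ↔ Viol S k Q b := by
  simp only [violators, Finset.mem_filter, and_iff_right_iff_imp]
  exact fun h => h.1

lemma violators_card {S : Finset (ℝ × ℝ)} (hV : 4 < (hullV S).card) {k : ℝ × ℝ × ℝ} {Q : ℝ → Prop}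
    (hk : (∀ p ∈ S, 0 ≤ aff k p) ∧ (∀ t, Q t → t < 0) ∨
      (∀ p ∈ S, 0 < aff k p) ∧ (∀ t, Q t → t ≤ 0)) : (violators S k Q).card ≤ 2 :=
  card_le_two_of_adj (by omega) fun _ hb _ hb' hne =>
    (mem_violators.1 hb).adj hV hk (mem_violators.1 hb') hne

/-- Every hull edge violates one of three constraints; this is `Good.ear` restated. -/
lemma Good.cover {S : Finset (ℝ × ℝ)} (hS : Good S) (hV : 4 < (hullV S).card) :
    hullV S ⊆ violators S (1, 0, 0) (· < 0) ∪ violators S (0, 1, 0) (· < 0) ∪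
      violators S (0, 0, 1) (· ≤ 0) := by
  intro b hb
  obtain ⟨a, c, d, h⟩ := exists_chain hb
  simp only [Finset.mem_union, mem_violators]
  rcases hS.ear hV h with e | e | e
  · exact Or.inl (Or.inl ⟨hb, a, c, d, h, e⟩)
  · exact Or.inl (Or.inr ⟨hb, a, c, d, h, e⟩)
  · exact Or.inr ⟨hb, a, c, d, h, e⟩

lemma Good.aff_nonneg {S : Finset (ℝ × ℝ)} (hS : Good S) :
    (∀ p ∈ S, 0 ≤ aff (1, 0, 0) p) ∧ (∀ p ∈ S, 0 ≤ aff (0, 1, 0) p) ∧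
      (∀ p ∈ S, 0 < aff (0, 0, 1) p) := by
  refine ⟨fun p hp => ?_, fun p hp => ?_, fun p _ => ?_⟩
  · simpa [aff] using (hS.nonneg p hp).1
  · simpa [aff] using (hS.nonneg p hp).2
  · simp [aff]

lemma Good.violators_card {S : Finset (ℝ × ℝ)} (hS : Good S) (hV : 4 < (hullV S).card) :
    (violators S (1, 0, 0) (· < 0)).card ≤ 2 ∧ (violators S (0, 1, 0) (· < 0)).card ≤ 2 ∧
      (violators S (0, 0, 1) (· ≤ 0)).card ≤ 2 :=
  ⟨WedgeGuards.violators_card hV (Or.inl ⟨hS.aff_nonneg.1, fun _ h => h⟩),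
    WedgeGuards.violators_card hV (Or.inl ⟨hS.aff_nonneg.2.1, fun _ h => h⟩),
    WedgeGuards.violators_card hV (Or.inr ⟨hS.aff_nonneg.2.2, fun _ h => h⟩)⟩

/-- The convex hull has at most six vertices. -/
lemma Good.hullV_card {S : Finset (ℝ × ℝ)} (hS : Good S) : (hullV S).card ≤ 6 := by
  by_contra! hV
  have h1 := Finset.card_le_card (hS.cover (by omega))
  have h2 := hS.violators_card (by omega)
  have h3 := Finset.card_union_le (violators S (1, 0, 0) (· < 0) ∪ violators S (0, 1, 0) (· < 0))
    (violators S (0, 0, 1) (· ≤ 0))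
  have h4 := Finset.card_union_le (violators S (1, 0, 0) (· < 0)) (violators S (0, 1, 0) (· < 0))
  omega

/-- If two constraints of value `0` at the first, respectively the second, end of a hull edge
are both nonnegative on the guards, their sets of violators meet or one of them is small. -/
lemma violators_meet {S : Finset (ℝ × ℝ)} (hV : 4 < (hullV S).card) {k l : ℝ × ℝ × ℝ}
    (hk : ∀ p ∈ S, 0 ≤ aff k p) (hl : ∀ p ∈ S, 0 ≤ aff l p) {b c : ℝ × ℝ} (h : Edge S b c)
    (kb : aff k b = 0) (kc : 0 < aff k c) (lc : aff l c = 0) (lb : 0 < aff l b) :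
    (∃ p, p ∈ violators S k (· < 0) ∧ p ∈ violators S l (· < 0)) ∨
      (violators S k (· < 0)).card ≤ 1 ∨ (violators S l (· < 0)).card ≤ 1 := by
  obtain ⟨a, ha⟩ := exists_prev h.left_mem'
  obtain ⟨z, hz⟩ := exists_prev ha.left_mem'
  obtain ⟨d, hd⟩ := exists_next h.right_mem'
  obtain ⟨w, hw⟩ := exists_next hd.right_mem'
  have ch : Chain S a b c d := ⟨ha, h, hd⟩
  have ch1 : Chain S z a b c := ⟨hz, ha, h⟩
  have ch2 : Chain S b c d w := ⟨h, hd, hw⟩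
  obtain ⟨p1, p2⟩ := ch.pos hV
  have adj := fun {k} (hk : ∀ p ∈ S, 0 ≤ aff k p) {b b'} (h : Viol S k (· < 0) b)
    (h' : Viol S k (· < 0) b') (hne : b ≠ b') =>
    Viol.adj hV (Or.inl ⟨hk, fun _ h => h⟩) h h' hne
  rcases (hk a ha.left_mem).eq_or_lt with ka | ka
  · right; left
    have va : Viol S k (· < 0) a := by
      refine ⟨ha.left_mem', z, b, c, ch1, ?_⟩
      rw [tip_eq, kb, zero_mul, zero_sub]
      exact neg_neg_of_pos (mul_pos kc (ch1.pos hV).1)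
    refine Finset.card_le_one.2 ?_
    suffices H : ∀ x ∈ violators S k (· < 0), x = a from
      fun x hx y hy => (H x hx).trans (H y hy).symm
    intro x hx
    by_contra hxa
    have vx := mem_violators.1 hx
    obtain ⟨-, a', c', d', hc', hq⟩ := id vx
    rcases adj hk vx va hxa with e | e
    · obtain rfl := hc'.bc.next_unique e
      obtain rfl := hc'.cd.next_unique ha
      rw [tip_eq, kb, ← ka] at hq
      simp at hq
    · obtain rfl := e.next_unique ha
      obtain rfl := hc'.ab.prev_unique ha
      rw [tip, kb, ← ka] at hq
      simp at hq
  rcases (hl d hd.right_mem).eq_or_lt with ld | ld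
  · right; right
    have vc : Viol S l (· < 0) c := by
      refine ⟨hd.left_mem', b, d, w, ch2, ?_⟩
      rw [tip, lc, zero_mul, zero_sub]
      exact neg_neg_of_pos (mul_pos lb (ch2.pos hV).2)
    refine Finset.card_le_one.2 ?_
    suffices H : ∀ x ∈ violators S l (· < 0), x = c from
      fun x hx y hy => (H x hx).trans (H y hy).symm
    intro x hx
    by_contra hxc
    have vx := mem_violators.1 hx
    obtain ⟨-, a', c', d', hc', hq⟩ := id vx
    rcases adj hl vx vc hxc with e | e
    · obtain rfl := hc'.bc.next_unique e
      obtain rfl := hc'.cd.next_unique hd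
      rw [tip_eq, lc, ← ld] at hq
      simp at hq
    · obtain rfl := e.next_unique hd
      obtain rfl := hc'.ab.prev_unique hd
      rw [tip, lc, ← ld] at hq
      simp at hq
  · left
    refine ⟨b, mem_violators.2 ⟨h.left_mem', a, c, d, ch, ?_⟩,
      mem_violators.2 ⟨h.left_mem', a, c, d, ch, ?_⟩⟩
    · rw [tip, kb, zero_mul, zero_sub]
      exact neg_neg_of_pos (mul_pos ka p2)
    · rw [tip_eq, lc, zero_mul, zero_sub]
      exact neg_neg_of_pos (mul_pos ld p1)

/-- A hull edge containing a third guard connects the two legs of the quadrant, and then the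
convex hull has at most five vertices. -/
lemma Good.hullV_card_of_beyond {S : Finset (ℝ × ℝ)} (hS : Good S) {b y c : ℝ × ℝ}
    (h : Edge S b c) (hy : y ∈ S) (hb : Beyond b y c) : (hullV S).card ≤ 5 := by
  by_contra! hV
  have hV : 4 < (hullV S).card := by omega
  have h1 := Finset.card_le_card (hS.cover hV)
  obtain ⟨c1, c2, c3⟩ := hS.violators_card hV
  set X := violators S (1, 0, 0) (· < 0)
  set Y := violators S (0, 1, 0) (· < 0)
  have h3 := Finset.card_union_le (X ∪ Y) (violators S (0, 0, 1) (· ≤ 0))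
  have h4 := Finset.card_union_add_card_inter X Y
  have H : (∃ p, p ∈ X ∧ p ∈ Y) ∨ X.card ≤ 1 ∨ Y.card ≤ 1 := by
    obtain ⟨nx, ny, -⟩ := hS.aff_nonneg
    rcases hS.ends h.left_mem hy h.right_mem hb with ⟨e1, e2, e3, e4⟩ | ⟨e1, e2, e3, e4⟩
    · exact violators_meet hV nx ny h (by simp [aff, e1]) (by simp [aff, e3]) (by simp [aff, e4])
        (by simp [aff, e2])
    · have := violators_meet hV ny nx h (by simp [aff, e1]) (by simp [aff, e3])
        (by simp [aff, e4]) (by simp [aff, e2])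
      rcases this with ⟨p, h, h'⟩ | h | h
      · exact Or.inl ⟨p, h', h⟩
      · exact Or.inr (Or.inr h)
      · exact Or.inr (Or.inl h)
  rcases H with ⟨p, h, h'⟩ | h | h
  · have := Finset.card_pos.2 ⟨p, Finset.mem_inter.2 ⟨h, h'⟩⟩
    omega
  · omega
  · omega

open Classical in
/-- The initial vertices of the hull edges that contain a third guard. -/
def longEdges (S : Finset (ℝ × ℝ)) : Finset (ℝ × ℝ) :=
  (hullV S).filter (fun b => ∃ c y, Edge S b c ∧ y ∈ S ∧ Beyond b y c)

lemma mem_longEdges {S : Finset (ℝ × ℝ)} {b : ℝ × ℝ} :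
    b ∈ longEdges S ↔ b ∈ hullV S ∧ ∃ c y, Edge S b c ∧ y ∈ S ∧ Beyond b y c := by
  simp [longEdges]

/-- A hull edge containing a third guard connects the two legs, and there is at most one such edge
per direction. -/
lemma Good.longEdges_card {S : Finset (ℝ × ℝ)} (hS : Good S) : (longEdges S).card ≤ 2 := by
  classical
  have h : longEdges S ⊆
      (longEdges S).filter (fun b => ∃ c, Edge S b c ∧ b.1 = 0 ∧ 0 < c.1 ∧ c.2 = 0) ∪
      (longEdges S).filter (fun b => ∃ c, Edge S b c ∧ b.2 = 0 ∧ 0 < c.2 ∧ c.1 = 0) := by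
    intro b hb
    obtain ⟨hbV, c, y, e, hy, hby⟩ := mem_longEdges.1 hb
    rw [Finset.mem_union, Finset.mem_filter, Finset.mem_filter]
    rcases hS.ends e.left_mem hy e.right_mem hby with ⟨e1, e2, e3, e4⟩ | ⟨e1, e2, e3, e4⟩
    · exact Or.inl ⟨hb, c, e, e1, e3, e4⟩
    · exact Or.inr ⟨hb, c, e, e1, e3, e4⟩
  refine (Finset.card_le_card h).trans ((Finset.card_union_le _ _).trans
    (add_le_add (b := 1) (d := 1) ?_ ?_))
  · refine Finset.card_le_one.2 fun b hb b' hb' => ?_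
    obtain ⟨-, c, e, e1, e2, e3⟩ := Finset.mem_filter.1 hb
    obtain ⟨-, c', e', e1', e2', e3'⟩ := Finset.mem_filter.1 hb'
    have i1 := e.nonneg b' e'.left_mem
    have i2 := e'.nonneg b e.left_mem
    simp only [D, e1, e3, e1', e3', sub_self, sub_zero, mul_zero] at i1 i2
    have j1 := nonneg_of_mul_nonneg_right i1 e2
    have j2 := nonneg_of_mul_nonneg_right i2 e2'
    exact Prod.ext (e1.trans e1'.symm) (by linarith)
  · refine Finset.card_le_one.2 fun b hb b' hb' => ?_
    obtain ⟨-, c, e, e1, e2, e3⟩ := Finset.mem_filter.1 hb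
    obtain ⟨-, c', e', e1', e2', e3'⟩ := Finset.mem_filter.1 hb'
    have i1 := e.nonneg b' e'.left_mem
    have i2 := e'.nonneg b e.left_mem
    simp only [D, e1, e3, e1', e3', sub_self, sub_zero, mul_zero, zero_sub] at i1 i2
    have j1 : b'.1 - b.1 ≤ 0 := by nlinarith
    have j2 : b.1 - b'.1 ≤ 0 := by nlinarith
    exact Prod.ext (by linarith) (e1.trans e1'.symm)

/-! ### Counting guards by a fan of triangles -/

/-- The triangles spanned by a hull vertex `v` and the hull edges cover the guards. -/
lemma exists_fan {S : Finset (ℝ × ℝ)} (hV : 2 < (hullV S).card) {v r g : ℝ × ℝ}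
    (hr : Edge S r v) (hg : g ∈ S) :
    ∃ p q, Edge S p q ∧ p ≠ v ∧ p ≠ r ∧ q ≠ v ∧ InTri v p q g := by
  classical
  have hv := hr.right_mem'
  obtain ⟨α, β, he⟩ := exposes_of_mem hv
  obtain ⟨n, hn⟩ := exists_next hv
  set l : ℝ × ℝ → ℝ := fun g => α * (g.1 - v.1) + β * (g.2 - v.2) with hl
  set m : ℝ × ℝ → ℝ := fun g => α * (g.2 - v.2) - β * (g.1 - v.1) with hm
  have hD : ∀ p g, (α ^ 2 + β ^ 2) * D v p g = l p * m g - m p * l g := by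
    intro p g; simp only [hl, hm, D]; ring
  -- the last vertex, in angular order, that does not come after `g`
  obtain ⟨p, hp, hmax⟩ := ((hullV S).filter (fun p => p ≠ v ∧ p ≠ r ∧ 0 ≤ D v p g)).exists_max_image
    (fun p => m p / l p) ⟨n, Finset.mem_filter.2 ⟨hn.right_mem', hn.ne.symm, by
      rintro rfl
      exact no_two_cycle hV hn hr, hn.nonneg g hg⟩⟩
  obtain ⟨hpV, hpv, hpr, hpg⟩ := Finset.mem_filter.1 hp
  obtain ⟨q, hq⟩ := exists_next hpV
  have hqv : q ≠ v := by
    rintro rfl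
    exact hpr (hq.prev_unique hr)
  refine ⟨p, q, hq, hpv, hpr, hqv, hpg, hq.nonneg g hg, ?_⟩
  by_cases hqr : q = r
  · rw [hqr]
    exact hr.nonneg g hg
  by_contra hlt
  have hqg : 0 ≤ D v q g := by rw [D_swap]; linarith
  have h1 := hmax q (Finset.mem_filter.2 ⟨hq.right_mem', hqv, hqr, hqg⟩)
  have h2 : 0 < D v p q := by
    rw [← D_cyc]
    exact hq.pos hv hpv.symm hqv.symm
  have lp : 0 < l p := he p hq.left_mem hpv
  have lq : 0 < l q := he q hq.right_mem hqv
  rw [div_le_div_iff₀ lq lp] at h1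
  have h3 := hD p q
  nlinarith [mul_nonneg (add_nonneg (sq_nonneg α) (sq_nonneg β)) h2.le,
    (show 0 < α ^ 2 + β ^ 2 by
      by_contra hcon
      have ha : α = 0 := by nlinarith [sq_nonneg α, sq_nonneg β]
      have hb : β = 0 := by nlinarith [sq_nonneg α, sq_nonneg β]
      simp only [hl, ha, hb] at lp
      linarith)]

/-- Triangulate the convex hull by the fan at the hull vertex `v`, and let `c p` bound the number of
guards that are no hull vertices in the triangle on the hull edge starting at `p`. Summing over
the two fewer triangles than hull vertices bounds the number of all such guards. -/
lemma fan_count {S : Finset (ℝ × ℝ)} (hV : 2 < (hullV S).card) {v : ℝ × ℝ} (hv : v ∈ hullV S)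
    (c : ℝ × ℝ → ℕ) (hc : ∀ p q, Edge S p q → p ≠ v → q ≠ v → ∀ T ⊆ S \ hullV S,
      (∀ g ∈ T, InTri v p q g) → T.card ≤ c p) :
    ∃ U ⊆ hullV S, U.card + 2 = (hullV S).card ∧ (S \ hullV S).card ≤ ∑ p ∈ U, c p := by
  classical
  obtain ⟨r, hr⟩ := exists_prev hv
  choose! φ q h1 h2 h3 h4 h5 using fun g (hg : g ∈ S) => exists_fan hV hr hg
  have hmem := fun {g} (hg : g ∈ S \ hullV S) => (Finset.mem_sdiff.1 hg).1
  refine ⟨((hullV S).erase v).erase r, (Finset.erase_subset _ _).trans (Finset.erase_subset _ _),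
    ?_, ?_⟩
  · rw [Finset.card_erase_of_mem (Finset.mem_erase.2 ⟨hr.ne, hr.left_mem'⟩),
      Finset.card_erase_of_mem hv]
    omega
  · rw [Finset.card_eq_sum_card_fiberwise (f := φ) (t := ((hullV S).erase v).erase r)
      fun g hg => Finset.mem_erase.2 ⟨h3 g (hmem hg), Finset.mem_erase.2 ⟨h2 g (hmem hg),
        (h1 g (hmem hg)).left_mem'⟩⟩]
    refine Finset.sum_le_sum fun p hp => ?_
    rcases Finset.eq_empty_or_nonempty ((S \ hullV S).filter (fun g => φ g = p)) with h | ⟨x, hxT⟩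
    · rw [h]; simp
    obtain ⟨hx, rfl⟩ := Finset.mem_filter.1 hxT
    refine hc (φ x) (q x) (h1 x (hmem hx)) (h2 x (hmem hx)) (h4 x (hmem hx)) _
      (Finset.filter_subset _ _) fun g hg => ?_
    obtain ⟨hg, e⟩ := Finset.mem_filter.1 hg
    have hgS := hmem hg
    have e1 := h1 g hgS
    have e2 := h5 g hgS
    rw [e] at e1 e2
    rwa [(h1 x (hmem hx)).next_unique e1]

/-- A triangle of hull vertices contains at most two other guards. -/
lemma Good.fibre_le_two {S : Finset (ℝ × ℝ)} (hS : Good S) {v p q : ℝ × ℝ} (hv : v ∈ hullV S)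
    (h : Edge S p q) (hp : p ≠ v) (hq : q ≠ v) {T : Finset (ℝ × ℝ)} (hT : T ⊆ S \ hullV S)
    (ht : ∀ g ∈ T, InTri v p q g) : T.card ≤ 2 := by
  by_contra! hcard
  obtain ⟨x, y, z, hx, hy, hz, hxy, hxz, hyz⟩ := Finset.two_lt_card_iff.1 hcard
  have hpos : 0 < D v p q := by
    rw [← D_cyc]
    exact h.pos hv hp.symm hq.symm
  have mem := fun {g} (hg : g ∈ T) => (Finset.mem_sdiff.1 (hT hg)).1
  have ne := fun {g w} (hg : g ∈ T) (hw : w ∈ hullV S) (e : g = w) =>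
    (Finset.mem_sdiff.1 (hT hg)).2 (e ▸ hw)
  exact hS.tri_three (mem_hullV.1 hv).1 h.left_mem h.right_mem (mem hx) (mem hy) (mem hz) hpos
    (ht x hx) (ht y hy) (ht z hz) hxy hxz hyz (ne hx hv) (ne hx h.left_mem') (ne hx h.right_mem')
    (ne hy hv) (ne hy h.left_mem') (ne hy h.right_mem')
    (ne hz hv) (ne hz h.left_mem') (ne hz h.right_mem')

/-- If the apex `v` of the fan is on neither leg of the quadrant, then a triangle of the fan
contains two further guards only if its outer side is a hull edge with a third guard on it. -/
lemma Good.fibre_le_one {S : Finset (ℝ × ℝ)} (hS : Good S) {v p q : ℝ × ℝ} (hv : v ∈ hullV S)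
    (h : Edge S p q) (hp : p ≠ v) (hq : q ≠ v) {T : Finset (ℝ × ℝ)} (hT : T ⊆ S \ hullV S)
    (ht : ∀ g ∈ T, InTri v p q g) (v1 : v.1 ≠ 0) (v2 : v.2 ≠ 0) (hpe : p ∉ longEdges S) :
    T.card ≤ 1 := by
  by_contra! hcard
  obtain ⟨x, y, hx, hy, hxy⟩ := Finset.one_lt_card_iff.1 hcard
  have hpos : 0 < D v p q := by
    rw [← D_cyc]
    exact h.pos hv hp.symm hq.symm
  have mem := fun {g} (hg : g ∈ T) => (Finset.mem_sdiff.1 (hT hg)).1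
  have ne := fun {g w} (hg : g ∈ T) (hw : w ∈ hullV S) (e : g = w) =>
    (Finset.mem_sdiff.1 (hT hg)).2 (e ▸ hw)
  obtain ⟨z, hz, hb⟩ := hS.tri_side (mem_hullV.1 hv).1 h.left_mem h.right_mem (mem hx) (mem hy)
    hpos (ht x hx) (ht y hy) hxy (ne hx hv) (ne hx h.left_mem') (ne hx h.right_mem')
    (ne hy hv) (ne hy h.left_mem') (ne hy h.right_mem') v1 v2
  exact hpe (mem_longEdges.2 ⟨h.left_mem', q, z, h, hz, hb⟩)

/-- Collinear guards: at most one guard lies between two others. -/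
lemma Good.between_unique {S : Finset (ℝ × ℝ)} (hS : Good S) {a b x y : ℝ × ℝ} (ha : a ∈ S)
    (hb : b ∈ S) (hx : x ∈ S) (hy : y ∈ S) (h : Beyond a x b) (h' : Beyond a y b) : x = y := by
  have aux : ∀ {x y : ℝ × ℝ} {s t : ℝ}, x ∈ S → y ∈ S → a ≠ x → Beyond a y b →
      0 < s → 0 < t → b.1 = x.1 + t * (x.1 - a.1) → b.2 = x.2 + t * (x.2 - a.2) →
      b.1 = y.1 + s * (y.1 - a.1) → b.2 = y.2 + s * (y.2 - a.2) → s < t → False := by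
    intro x y s t hx hy hax h' hs ht e1 e2 e3 e4 hlt
    have hbey : Beyond a x y := by
      refine ⟨hax, (t - s) / (1 + s), div_pos (by linarith) (by linarith), ?_, ?_⟩
      · field_simp; linarith
      · field_simp; linarith
    have m := hS.mid ha hy hb h'
    rcases hS.ends ha hx hy hbey with h | h
    · exact m.2.ne' h.2.2.2
    · exact m.1.ne' h.2.2.2
  obtain ⟨hax, t, ht, e1, e2⟩ := id h
  obtain ⟨hay, s, hs, e3, e4⟩ := id h'
  rcases lt_trichotomy s t with hlt | rfl | hlt
  · exact (aux hx hy hax h' hs ht e1 e2 e3 e4 hlt).elim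
  · have hp : 1 + s ≠ 0 := by positivity
    have f1 : (1 + s) * (x.1 - y.1) = 0 := by linarith
    have f2 : (1 + s) * (x.2 - y.2) = 0 := by linarith
    exact Prod.ext (by linarith [(mul_eq_zero.1 f1).resolve_left hp])
      (by linarith [(mul_eq_zero.1 f2).resolve_left hp])
  · exact (aux hy hx hay h ht hs e3 e4 e1 e2 hlt).elim

lemma Good.card_le_of_collinear {S : Finset (ℝ × ℝ)} (hS : Good S) {a b : ℝ × ℝ}
    (h : Edge S a b) (h' : Edge S b a) : S.card ≤ 3 := by
  classical
  have hsub : S ⊆ {a, b} ∪ S.filter (fun g => Beyond a g b) := by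
    intro g hg
    have h1 := h.nonneg g hg
    have h2 := h'.nonneg g hg
    rw [D_swap] at h2
    rw [Finset.mem_union, Finset.mem_insert, Finset.mem_singleton, Finset.mem_filter]
    rcases h.zero g hg (by linarith) with e | e | e
    · exact Or.inl (Or.inl e)
    · exact Or.inl (Or.inr e)
    · exact Or.inr ⟨hg, e⟩
  have h1 : (S.filter (fun g => Beyond a g b)).card ≤ 1 := by
    refine Finset.card_le_one.2 fun x hx y hy => ?_
    rw [Finset.mem_filter] at hx hy
    exact hS.between_unique h.left_mem h.right_mem hx.1 hy.1 hx.2 hy.2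
  have h2 := Finset.card_le_two (a := a) (b := b)
  have h3 := Finset.card_le_card hsub
  have h4 := Finset.card_union_le {a, b} (S.filter (fun g => Beyond a g b))
  omega

lemma Good.card_le_of_hullV_le_two {S : Finset (ℝ × ℝ)} (hS : Good S)
    (hV : (hullV S).card ≤ 2) : S.card ≤ 3 := by
  by_contra! hcard
  obtain ⟨v, hv⟩ := hullV_nonempty (S := S) (by omega)
  obtain ⟨q, hq⟩ := exists_next hv
  obtain ⟨r, hr⟩ := exists_prev hv
  have hqr : q = r := by
    by_contra hne
    have := Finset.two_lt_card_iff.2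
      ⟨v, q, r, hv, hq.right_mem', hr.left_mem', hq.ne, hr.ne.symm, hne⟩
    omega
  have := hS.card_le_of_collinear hq (hqr ▸ hr)
  omega

/-- Each leg carries at most two guards, so one of five hull vertices is on neither leg. -/
lemma Good.exists_off_legs {S : Finset (ℝ × ℝ)} (hS : Good S) (hV : 4 < (hullV S).card) :
    ∃ v ∈ hullV S, v.1 ≠ 0 ∧ v.2 ≠ 0 := by
  by_contra! h
  have h1 : hullV S ⊆ S.filter (fun p => p.1 = 0) ∪ S.filter (fun p => p.2 = 0) := by
    intro v hv
    rw [Finset.mem_union, Finset.mem_filter, Finset.mem_filter]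
    by_cases hv1 : v.1 = 0
    · exact Or.inl ⟨(mem_hullV.1 hv).1, hv1⟩
    · exact Or.inr ⟨(mem_hullV.1 hv).1, h v hv hv1⟩
  have h2 := Finset.card_le_card h1
  have h3 := Finset.card_union_le (S.filter (fun p => p.1 = 0)) (S.filter (fun p => p.2 = 0))
  have h4 := hS.leg_fst
  have h5 := hS.leg_snd
  omega

/-- A set of guards such that no point of the quadrant is hidden from two of them has at most
ten elements. -/
theorem Good.card_le {S : Finset (ℝ × ℝ)} (hS : Good S) : S.card ≤ 10 := by
  classical
  rcases le_or_gt (hullV S).card 2 with h2 | h2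
  · have := hS.card_le_of_hullV_le_two h2
    omega
  have hsub : hullV S ⊆ S := fun p hp => (mem_hullV.1 hp).1
  have hsum := Finset.card_sdiff_add_card_eq_card hsub
  rcases le_or_gt (hullV S).card 4 with h4 | h4
  · obtain ⟨v, hv⟩ := Finset.card_pos.1 (by omega : 0 < (hullV S).card)
    obtain ⟨U, -, hU, hle⟩ := fan_count h2 hv (fun _ => 2)
      fun p q h hp hq T hT ht => hS.fibre_le_two hv h hp hq hT ht
    rw [Finset.sum_const, smul_eq_mul] at hle
    omega
  · obtain ⟨v, hv, v1, v2⟩ := hS.exists_off_legs h4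
    obtain ⟨U, hUV, hU, hle⟩ := fan_count h2 hv
        (fun p => 1 + if p ∈ longEdges S then 1 else 0) <| by
      intro p q h hp hq T hT ht
      by_cases hpe : p ∈ longEdges S
      · simpa [hpe] using hS.fibre_le_two hv h hp hq hT ht
      · simpa [hpe] using hS.fibre_le_one hv h hp hq hT ht v1 v2 hpe
    rw [Finset.sum_add_distrib, Finset.sum_const, smul_eq_mul, ← Finset.card_filter] at hle
    have h5 : (U.filter (fun p => p ∈ longEdges S)).card ≤ (longEdges S).card :=
      Finset.card_le_card fun p hp => (Finset.mem_filter.1 hp).2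
    have h6 := hS.hullV_card
    rcases Finset.eq_empty_or_nonempty (longEdges S) with h7 | ⟨b, hb⟩
    · have h8 := Finset.card_eq_zero.2 h7
      omega
    · obtain ⟨-, c, y, e, hy, hbey⟩ := mem_longEdges.1 hb
      have h8 := hS.hullV_card_of_beyond e hy hbey
      have h9 := hS.longEdges_card
      omega

/-! ### Transfer to a wedge -/

/-- The affine parametrization of the wedge with apex `a` and legs `u`, `v`. -/
def place (a u v : Plane) (p : ℝ × ℝ) : Plane := a + p.1 • u + p.2 • v

lemma place_injective {u v : Plane} (h : LinearIndependent ℝ ![u, v]) (a : Plane) :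
    Function.Injective (place a u v) := by
  intro p q hpq
  have h0 : (p.1 - q.1) • u + (p.2 - q.2) • v = 0 := by
    have := sub_eq_zero.2 hpq
    rw [← this]
    simp only [place]
    module
  obtain ⟨h1, h2⟩ := LinearIndependent.pair_iff.1 h _ _ h0
  exact Prod.ext (sub_eq_zero.1 h1) (sub_eq_zero.1 h2)

lemma blocks_iff {u v : Plane} (h : LinearIndependent ℝ ![u, v]) (a : Plane) {g b q : ℝ × ℝ} :
    (place a u v b ≠ place a u v g ∧
      place a u v b ∈ openSegment ℝ (place a u v g) (place a u v q)) ↔ Beyond g b q := by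
  constructor
  · rintro ⟨hne, s, t, hs, ht, hst, e⟩
    have e' : place a u v (s * g.1 + t * q.1, s * g.2 + t * q.2) = place a u v b := by
      rw [← e]
      obtain rfl : s = 1 - t := by linarith
      simp only [place]
      module
    have e' := place_injective h a e'
    refine ⟨fun he => hne (he ▸ rfl), s / t, by positivity, ?_, ?_⟩
    · rw [← e']
      obtain rfl : s = 1 - t := by linarith
      field_simp
      ring
    · rw [← e']
      obtain rfl : s = 1 - t := by linarith
      field_simp
      ring
  · rintro ⟨hne, t, ht, e1, e2⟩
    refine ⟨fun he => hne (place_injective h a he).symm, t / (1 + t), 1 / (1 + t), by positivity,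
      by positivity, by field_simp; ring, ?_⟩
    have f1 : b.1 = t / (1 + t) * g.1 + 1 / (1 + t) * q.1 := by
      rw [e1]; field_simp; ring
    have f2 : b.2 = t / (1 + t) * g.2 + 1 / (1 + t) * q.2 := by
      rw [e2]; field_simp; ring
    have f3 : 1 / (1 + t) = 1 - t / (1 + t) := by field_simp; ring
    simp only [place]
    rw [f1, f2, f3]
    module

lemma hidden_iff {u v : Plane} (h : LinearIndependent ℝ ![u, v]) (a : Plane)
    (S : Finset (ℝ × ℝ)) (g q : ℝ × ℝ) [DecidableEq Plane] :
    Hidden (S.image (place a u v)) (place a u v g) (place a u v q) ↔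
      ∃ b ∈ S, Beyond g b q := by
  simp only [Hidden, Finset.mem_image]
  constructor
  · rintro ⟨_, ⟨b, hb, rfl⟩, hb'⟩
    exact ⟨b, hb, (blocks_iff h a).1 hb'⟩
  · rintro ⟨b, hb, hb'⟩
    exact ⟨_, ⟨b, hb, rfl⟩, (blocks_iff h a).2 hb'⟩

/-- A guard set of `k + 1` guards that `k`-covers the wedge leaves each point hidden from at most
one guard. -/
lemma good_of_covers {u v : Plane} (h : LinearIndependent ℝ ![u, v]) (a : Plane) {k : ℕ}
    [DecidableEq Plane] {S : Finset (ℝ × ℝ)} (hS : ∀ p ∈ S, 0 ≤ p.1 ∧ 0 ≤ p.2)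
    (hk : S.card = k + 1)
    (hc : KCovers (S.image (place a u v))
      {x | ∃ s t : ℝ, 0 ≤ s ∧ 0 ≤ t ∧ x = a + s • u + t • v} k) : Good S := by
  refine ⟨hS, fun q q1 q2 g hg b hb g' hg' b' hb' hne hq hq' => ?_⟩
  have h1 := hc (place a u v q) ⟨q.1, q.2, q1, q2, rfl⟩
  have h2 : {x ∈ (S.image (place a u v) : Set Plane) | ¬ Hidden (S.image (place a u v)) x
      (place a u v q)} ⊆ (((S.erase g).erase g').image (place a u v) : Finset Plane) := by
    rintro x ⟨hx, hv⟩
    obtain ⟨p, hp, rfl⟩ := Finset.mem_image.1 (Finset.mem_coe.1 hx)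
    rw [hidden_iff h] at hv
    refine Finset.mem_coe.2 (Finset.mem_image_of_mem _ (Finset.mem_erase.2 ⟨?_,
      Finset.mem_erase.2 ⟨?_, hp⟩⟩))
    · rintro rfl
      exact hv ⟨b', hb', hq'⟩
    · rintro rfl
      exact hv ⟨b, hb, hq⟩
  have h3 := Set.ncard_le_ncard h2 (Finset.finite_toSet _)
  rw [Set.ncard_coe_finset, Finset.card_image_of_injective _ (place_injective h a),
    Finset.card_erase_of_mem (Finset.mem_erase.2 ⟨hne.symm, hg'⟩),
    Finset.card_erase_of_mem hg] at h3
  have h4 := Finset.one_lt_card_iff.2 ⟨g, g', hg, hg', hne⟩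
  omega

/-- If every point is hidden from at most two of `k + 2` guards, then these guards `k`-cover. -/
lemma covers_of_hidden {u v : Plane} (h : LinearIndependent ℝ ![u, v]) (a : Plane) {k : ℕ}
    [DecidableEq Plane] {S : Finset (ℝ × ℝ)} (hk : S.card = k + 2)
    (H : ∀ q : ℝ × ℝ, 0 ≤ q.1 → 0 ≤ q.2 → ∃ T : Finset (ℝ × ℝ), T.card ≤ 2 ∧
      ∀ g ∈ S, ∀ b ∈ S, Beyond g b q → g ∈ T) :
    KCovers (S.image (place a u v))
      {x | ∃ s t : ℝ, 0 ≤ s ∧ 0 ≤ t ∧ x = a + s • u + t • v} k := by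
  classical
  rintro x ⟨s, t, hs, ht, rfl⟩
  obtain ⟨T, hT, hST⟩ := H (s, t) hs ht
  have h2 : (((S \ T).image (place a u v) : Finset Plane) : Set Plane) ⊆
      {x ∈ (S.image (place a u v) : Set Plane) | ¬ Hidden (S.image (place a u v)) x
        (place a u v (s, t))} := by
    intro x hx
    obtain ⟨p, hp, rfl⟩ := Finset.mem_image.1 (Finset.mem_coe.1 hx)
    rw [Finset.mem_sdiff] at hp
    refine ⟨Finset.mem_coe.2 (Finset.mem_image_of_mem _ hp.1), ?_⟩
    rw [hidden_iff h]
    rintro ⟨b, hb, hpb⟩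
    exact hp.2 (hST p hp.1 b hb hpb)
  have h3 := Set.ncard_le_ncard h2 ((Finset.finite_toSet _).subset (Set.sep_subset _ _))
  rw [Set.ncard_coe_finset, Finset.card_image_of_injective _ (place_injective h a)] at h3
  have h4 := Finset.le_card_sdiff T S
  exact le_trans (by omega) h3

/-! ### A configuration on a steep exponential curve -/

/-- Slopes of the chords of the points `(i, C ^ i)`: the chord slopes are separated by powers
of `C`. -/
lemma chord_slope {n i j : ℕ} {C : ℝ} (hC : C = n + 1) (hij : i < j) (hj : j < n) :
    ∃ s : ℝ, C ^ j - C ^ i = s * (j - i) ∧ s < C ^ j ∧ ∀ m < j, C ^ m ≤ s := by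
  have hC1 : 1 ≤ C := by rw [hC]; linarith [(Nat.cast_nonneg n : (0:ℝ) ≤ n)]
  have hC0 : 0 < C := by linarith
  have hd : (1 : ℝ) ≤ j - i := by
    have : ((i + 1 : ℕ) : ℝ) ≤ j := by exact_mod_cast hij
    push_cast at this
    linarith
  have hd0 : (0 : ℝ) < j - i := by linarith
  refine ⟨(C ^ j - C ^ i) / (j - i), by field_simp, ?_, fun m hm => ?_⟩
  · rw [div_lt_iff₀ hd0]
    have h1 : 0 < C ^ i := by positivity
    have h2 : 0 < C ^ j := by positivity
    nlinarith
  · rw [le_div_iff₀ hd0]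
    obtain ⟨j, rfl⟩ : ∃ l, j = l + 1 := ⟨j - 1, by omega⟩
    have h1 : C ^ m ≤ C ^ j := pow_le_pow_right₀ hC1 (by omega)
    have h2 : C ^ i ≤ C ^ j := pow_le_pow_right₀ hC1 (by omega)
    have h3 : ((j + 1 : ℕ) : ℝ) - i ≤ n := by
      have : ((j + 1 : ℕ) : ℝ) ≤ n := by exact_mod_cast hj.le
      linarith [(Nat.cast_nonneg i : (0:ℝ) ≤ i)]
    have h4 : 0 < C ^ m := by positivity
    have h5 : C ^ m * (((j + 1 : ℕ) : ℝ) - i) ≤ C ^ j * n := by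
      refine mul_le_mul h1 h3 hd0.le (by positivity)
    rw [pow_succ, hC] at *
    linarith

/-- At most one guard is hidden by a guard further to the right. -/
lemma upward_unique {n i j i' j' : ℕ} {C : ℝ} (hC : C = n + 1) (hj : j < n) (hj' : j' < n)
    (hij : i < j) (hij' : i' < j') {q : ℝ × ℝ}
    (h : Beyond ((i : ℝ), C ^ i) ((j : ℝ), C ^ j) q)
    (h' : Beyond ((i' : ℝ), C ^ i') ((j' : ℝ), C ^ j') q) : i = i' := by
  have hC0 : 0 < C := by rw [hC]; positivity
  have c1 : ∀ {i j i' j' : ℕ}, j < n → j' < n → i < j → i' < j' →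
      Beyond ((i : ℝ), C ^ i) ((j : ℝ), C ^ j) q →
      Beyond ((i' : ℝ), C ^ i') ((j' : ℝ), C ^ j') q → j < j' → False := by
    rintro i j i' j' hj hj' hij hij' ⟨-, t, ht, e1, e2⟩ ⟨-, t', ht', e1', e2'⟩ hlt
    obtain ⟨s, hs, hs1, -⟩ := chord_slope hC hij hj
    obtain ⟨s', hs', -, hs2'⟩ := chord_slope hC hij' hj'
    obtain ⟨r, hr, -, hr2⟩ := chord_slope hC hlt hj'
    have b1 := hs2' j hlt
    have b2 := hr2 j hlt
    simp only at e1 e2 e1' e2'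
    have f : q.2 = C ^ j + s * (q.1 - j) := by rw [e2, hs, e1]; ring
    have f' : q.2 = C ^ j' + s' * (q.1 - j') := by rw [e2', hs', e1']; ring
    have d1 : (0 : ℝ) < j' - j := sub_pos.2 (by exact_mod_cast hlt)
    have d2 : (0 : ℝ) < j' - i' := sub_pos.2 (by exact_mod_cast hij')
    have d3 : 0 < q.1 - j' := by rw [e1']; nlinarith
    nlinarith [mul_pos d1 (sub_pos.2 (hs1.trans_le b2)), mul_pos d3 (sub_pos.2 (hs1.trans_le b1))]
  have c2 : ∀ {i i' j : ℕ}, j < n → i < j → i' < j →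
      Beyond ((i : ℝ), C ^ i) ((j : ℝ), C ^ j) q →
      Beyond ((i' : ℝ), C ^ i') ((j : ℝ), C ^ j) q → i < i' → False := by
    rintro i i' j hj hij hij' ⟨-, t, ht, e1, e2⟩ ⟨-, t', ht', e1', e2'⟩ hlt
    obtain ⟨s, hs, -, -⟩ := chord_slope hC hij hj
    obtain ⟨s', hs', -, hs2'⟩ := chord_slope hC hij' hj
    obtain ⟨r, hr, hr1, -⟩ := chord_slope hC hlt (hij'.trans hj)
    simp only at e1 e2 e1' e2'
    have f : q.2 = C ^ j + s * (q.1 - j) := by rw [e2, hs, e1]; ring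
    have f' : q.2 = C ^ j + s' * (q.1 - j) := by rw [e2', hs', e1']; ring
    have d1 : (0 : ℝ) < i' - i := sub_pos.2 (by exact_mod_cast hlt)
    have d2 : (0 : ℝ) < j - i := sub_pos.2 (by exact_mod_cast hij)
    have d3 : 0 < q.1 - j := by rw [e1]; nlinarith
    have g1 : s = s' := mul_right_cancel₀ d3.ne' (by linarith)
    have g2 : r = s' := mul_right_cancel₀ d1.ne' (by rw [← hr, ← g1]; nlinarith)
    have := hs2' i' hij'
    linarith
  rcases lt_trichotomy j j' with hlt | rfl | hlt
  · exact (c1 hj hj' hij hij' h h' hlt).elim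
  · rcases lt_trichotomy i i' with hlt | rfl | hlt
    · exact (c2 hj hij hij' h h' hlt).elim
    · rfl
    · exact (c2 hj hij' hij h' h hlt).elim
  · exact (c1 hj' hj hij' hij h' h hlt).elim

/-- At most one guard is hidden by a guard further to the left, since the steep rays leave the
quadrant early. -/
lemma downward_unique {n i j i' j' : ℕ} {C : ℝ} (hC : C = n + 1) (hj : j < n) (hj' : j' < n)
    (hij : i < j) (hij' : i' < j') {q : ℝ × ℝ} (hq : 0 ≤ q.2)
    (h : Beyond ((j : ℝ), C ^ j) ((i : ℝ), C ^ i) q)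
    (h' : Beyond ((j' : ℝ), C ^ j') ((i' : ℝ), C ^ i') q) : j = j' := by
  have hC0 : 0 < C := by rw [hC]; positivity
  have c1 : ∀ {i j i' j' : ℕ}, j < n → j' < n → i < j → i' < j' →
      Beyond ((j : ℝ), C ^ j) ((i : ℝ), C ^ i) q →
      Beyond ((j' : ℝ), C ^ j') ((i' : ℝ), C ^ i') q → i < i' → False := by
    rintro i j i' j' hj hj' hij hij' ⟨-, t, ht, e1, e2⟩ ⟨-, t', ht', e1', e2'⟩ hlt
    obtain ⟨s', hs', -, hs2'⟩ := chord_slope hC hij' hj'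
    have b1 := hs2' i' hij'
    simp only at e1 e2 e1' e2'
    have f' : q.2 = C ^ i' - s' * (i' - q.1) := by
      rw [e1', e2']; linear_combination - t' * hs'
    have d1 : (i : ℝ) + 1 ≤ i' := by exact_mod_cast hlt
    have d2 : (0 : ℝ) < j - i := sub_pos.2 (by exact_mod_cast hij)
    have d3 : 1 < i' - q.1 := by rw [e1]; nlinarith
    have : 0 < C ^ i' := by positivity
    nlinarith
  have c2 : ∀ {i j j' : ℕ}, j < n → j' < n → i < j → i < j' →
      Beyond ((j : ℝ), C ^ j) ((i : ℝ), C ^ i) q →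
      Beyond ((j' : ℝ), C ^ j') ((i : ℝ), C ^ i) q → j < j' → False := by
    rintro i j j' hj hj' hij hij' ⟨-, t, ht, e1, e2⟩ ⟨-, t', ht', e1', e2'⟩ hlt
    obtain ⟨s, hs, hs1, -⟩ := chord_slope hC hij hj
    obtain ⟨s', hs', -, hs2'⟩ := chord_slope hC hij' hj'
    have b1 := hs2' j hlt
    simp only at e1 e2 e1' e2'
    have f : q.2 = C ^ i - s * (i - q.1) := by
      rw [e1, e2]; linear_combination - t * hs
    have f' : q.2 = C ^ i - s' * (i - q.1) := by
      rw [e1', e2']; linear_combination - t' * hs'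
    have d2 : (0 : ℝ) < j - i := sub_pos.2 (by exact_mod_cast hij)
    have d3 : 0 < i - q.1 := by rw [e1]; nlinarith
    have g1 : s = s' := mul_right_cancel₀ d3.ne' (by linarith)
    linarith
  rcases lt_trichotomy i i' with hlt | rfl | hlt
  · exact (c1 hj hj' hij hij' h h' hlt).elim
  · rcases lt_trichotomy j j' with hlt | rfl | hlt
    · exact (c2 hj hj' hij hij' h h' hlt).elim
    · rfl
    · exact (c2 hj' hj hij' hij h' h hlt).elim
  · exact (c1 hj' hj hij' hij h' h hlt).elim

/-- With `C = n + 1`, the points `(i, C ^ i)`, `i < n`, are such that each point of the quadrant is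
hidden from at most one of them by a later one, and from at most one of them by an earlier one. -/
lemma exists_config (n : ℕ) : ∃ S : Finset (ℝ × ℝ), S.card = n ∧
    (∀ p ∈ S, 0 ≤ p.1 ∧ 0 ≤ p.2) ∧
    ∀ q : ℝ × ℝ, 0 ≤ q.1 → 0 ≤ q.2 → ∃ T : Finset (ℝ × ℝ), T.card ≤ 2 ∧
      ∀ g ∈ S, ∀ b ∈ S, Beyond g b q → g ∈ T := by
  classical
  obtain ⟨C, hC⟩ : ∃ C : ℝ, C = n + 1 := ⟨_, rfl⟩
  have hC0 : 0 < C := by rw [hC]; positivity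
  set P : ℕ → ℝ × ℝ := fun i => ((i : ℝ), C ^ i) with hP
  have hinj : Function.Injective P := fun i j h => by
    have : (i : ℝ) = j := congrArg Prod.fst h
    exact_mod_cast this
  refine ⟨(Finset.range n).image P, ?_, ?_, fun q _ hq => ?_⟩
  · rw [Finset.card_image_of_injective _ hinj, Finset.card_range]
  · intro p hp
    obtain ⟨i, -, rfl⟩ := Finset.mem_image.1 hp
    exact ⟨Nat.cast_nonneg i, by positivity⟩
  set U := (Finset.range n).filter (fun i => ∃ j, j < n ∧ i < j ∧ Beyond (P i) (P j) q) with hU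
  set L := (Finset.range n).filter (fun j => ∃ i, i < j ∧ Beyond (P j) (P i) q) with hL
  have h1 : U.card ≤ 1 := by
    refine Finset.card_le_one.2 fun i hi i' hi' => ?_
    obtain ⟨-, j, hj, hij, h⟩ := Finset.mem_filter.1 hi
    obtain ⟨-, j', hj', hij', h'⟩ := Finset.mem_filter.1 hi'
    exact upward_unique hC hj hj' hij hij' h h'
  have h2 : L.card ≤ 1 := by
    refine Finset.card_le_one.2 fun j hj j' hj' => ?_
    obtain ⟨hj, i, hij, h⟩ := Finset.mem_filter.1 hj
    obtain ⟨hj', i', hij', h'⟩ := Finset.mem_filter.1 hj'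
    exact downward_unique hC (Finset.mem_range.1 hj) (Finset.mem_range.1 hj') hij hij' hq h h'
  refine ⟨(U ∪ L).image P, Finset.card_image_le.trans ((Finset.card_union_le U L).trans
    (by omega)), ?_⟩
  intro g hg b hb hgb
  obtain ⟨i, hi, rfl⟩ := Finset.mem_image.1 hg
  obtain ⟨j, hj, rfl⟩ := Finset.mem_image.1 hb
  refine Finset.mem_image_of_mem _ (Finset.mem_union.2 ?_)
  rcases lt_trichotomy i j with hlt | rfl | hlt
  · exact Or.inl (Finset.mem_filter.2 ⟨hi, j, Finset.mem_range.1 hj, hlt, hgb⟩)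
  · exact absurd rfl hgb.1
  · exact Or.inr (Finset.mem_filter.2 ⟨hi, j, hlt, hgb⟩)

end WedgeGuards

/-- In a wedge W, for every k ≥ 10: no guard set of exactly k + 1
guards k-covers W, and there is a guard set of exactly k + 2 guards that
k-covers W. -/
theorem statement17 (W : Set Plane) (hW : IsWedge W) (k : ℕ) (hk : 10 ≤ k) :
    (∀ G : Finset Plane, ↑G ⊆ W → G.card = k + 1 → ¬ KCovers G W k) ∧
    (∃ G : Finset Plane, ↑G ⊆ W ∧ G.card = k + 2 ∧ KCovers G W k) := by
  classical
  obtain ⟨a, u, v, huv, rfl⟩ := hW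
  refine ⟨fun G hG hcard hcov => ?_, ?_⟩
  · have hG' : (G : Set Plane) ⊆ WedgeGuards.place a u v '' {p | 0 ≤ p.1 ∧ 0 ≤ p.2} := by
      intro x hx
      obtain ⟨s, t, hs, ht, rfl⟩ := hG hx
      exact ⟨(s, t), ⟨hs, ht⟩, rfl⟩
    obtain ⟨S, hS, rfl⟩ := Finset.subset_set_image_iff.1 hG'
    rw [Finset.card_image_of_injective _ (WedgeGuards.place_injective huv a)] at hcard
    have := (WedgeGuards.good_of_covers huv a (fun p hp => hS hp) hcard hcov).card_le
    omega
  · obtain ⟨S, hcard, hS, H⟩ := WedgeGuards.exists_config (k + 2)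
    refine ⟨S.image (WedgeGuards.place a u v), ?_, ?_, WedgeGuards.covers_of_hidden huv a hcard H⟩
    · intro x hx
      obtain ⟨p, hp, rfl⟩ := Finset.mem_image.1 (Finset.mem_coe.1 hx)
      exact ⟨p.1, p.2, (hS p hp).1, (hS p hp).2, rfl⟩
    · rw [Finset.card_image_of_injective _ (WedgeGuards.place_injective huv a), hcard]
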